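/- arXiv:2108.12664 — 5 statements merged into one kernel-verified Lean document; each statement's English description precedes it below -/
import Mathlib

section
/- For every m > 0 and every constant C > 2/(4π)² there exists D ≥ 0 such that for all ε ∈ (0,1], all x ∈ ℝ² and all z ∈ εℤ², |G_ε(x,z)| ≤ C·log₊( 1/( min( √(|x|²+|z|²), ε ) ) ) + D. -/
open MeasureTheory

/-- The lattice symbol `σ_ε(k) = (4/ε²)(sin²(εk₁/2) + sin²(εk₂/2))`. -/
noncomputable def sigmaEps (ε : ℝ) (k : ℝ × ℝ) : ℝ :=
  (4 / ε ^ 2) * (Real.sin (ε * k.1 / 2) ^ 2 + Real.sin (ε * k.2 / 2) ^ 2)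

/-- The lattice Green function `G_ε` of `(m² - Δ_{ℝ²} - Δ_{εℤ²})²` on `ℝ² × εℤ²`:
`G_ε(x,z) = (2π)⁻⁴ ∫_{ℝ²} ∫_{[-π/ε,π/ε]²} e^{-i(x·y + z·k)} (|y|² + σ_ε(k) + m²)⁻² dk dy`. -/
noncomputable def latticeGreen (m ε : ℝ) (x z : ℝ × ℝ) : ℂ :=
  ((1 / (2 * Real.pi) ^ 4 : ℝ) : ℂ) *
    ∫ y : ℝ × ℝ,
      ∫ k in (Set.Icc (-(Real.pi / ε)) (Real.pi / ε) ×ˢ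
              Set.Icc (-(Real.pi / ε)) (Real.pi / ε)),
        Complex.exp (-Complex.I * ((x.1 * y.1 + x.2 * y.2) + (z.1 * k.1 + z.2 * k.2))) /
          ((((y.1 ^ 2 + y.2 ^ 2) + sigmaEps ε k + m ^ 2) ^ 2 : ℝ) : ℂ)

lemma radial_lintegral (g : ℝ → ENNReal) (hg : Measurable g) :
    ∫⁻ p : ℝ × ℝ, g (p.1 ^ 2 + p.2 ^ 2) =
      ENNReal.ofReal (2 * Real.pi) * ∫⁻ r in Set.Ioi (0 : ℝ), ENNReal.ofReal r * g (r ^ 2) := by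
  rw [← lintegral_comp_polarCoord_symm (fun p : ℝ × ℝ => g (p.1 ^ 2 + p.2 ^ 2))]
  have h1 : ∀ p : ℝ × ℝ, ENNReal.ofReal p.1 • g ((polarCoord.symm p).1 ^ 2 +
      (polarCoord.symm p).2 ^ 2) = (ENNReal.ofReal p.1 * g (p.1 ^ 2)) * 1 := by
    intro p
    rw [polarCoord_symm_apply]
    have : (p.1 * Real.cos p.2) ^ 2 + (p.1 * Real.sin p.2) ^ 2 = p.1 ^ 2 := by
      have := Real.sin_sq_add_cos_sq p.2
      linear_combination p.1 ^ 2 * this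
    simp [this]
  simp_rw [h1]
  have ht : polarCoord.target = Set.Ioi (0 : ℝ) ×ˢ Set.Ioo (-Real.pi) Real.pi := rfl
  rw [ht, Measure.volume_eq_prod, ← Measure.prod_restrict,
    lintegral_prod_mul (f := fun r : ℝ => ENNReal.ofReal r * g (r ^ 2)) (g := fun _ : ℝ => 1)
      (by fun_prop) (by fun_prop)]
  simp only [lintegral_const, one_mul, Measure.restrict_apply MeasurableSet.univ, Set.univ_inter,
    Real.volume_Ioo]
  rw [mul_comm]
  congr 2
  ring

lemma plane_lintegral (a : ℝ) (ha : 0 < a) :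
    ∫⁻ y : ℝ × ℝ, ENNReal.ofReal (1 / (y.1 ^ 2 + y.2 ^ 2 + a) ^ 2) =
      ENNReal.ofReal (Real.pi / a) := by
  rw [radial_lintegral (fun s => ENNReal.ofReal (1 / (s + a) ^ 2)) (by fun_prop)]
  have hd : ∀ r ∈ Set.Ici (0 : ℝ), HasDerivAt (fun r : ℝ => -(1 / 2) * (r ^ 2 + a)⁻¹)
      (r * (1 / (r ^ 2 + a) ^ 2)) r := by
    intro r _
    have hne : r ^ 2 + a ≠ 0 := by positivity
    have := ((((hasDerivAt_pow 2 r).add_const a).inv hne).const_mul (-(1 / 2) : ℝ))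
    refine this.congr_deriv ?_
    field_simp
    norm_num
  have hpos : ∀ r ∈ Set.Ioi (0 : ℝ), 0 ≤ r * (1 / (r ^ 2 + a) ^ 2) := by
    intro r hr
    have : 0 < r := hr
    positivity
  have ht : Filter.Tendsto (fun r : ℝ => -(1 / 2) * (r ^ 2 + a)⁻¹) Filter.atTop (nhds 0) := by
    have : Filter.Tendsto (fun r : ℝ => r ^ 2 + a) Filter.atTop Filter.atTop :=
      Filter.tendsto_atTop_add_const_right _ _ (Filter.tendsto_pow_atTop two_ne_zero)
    simpa using (tendsto_inv_atTop_zero.comp this).const_mul (-(1 / 2) : ℝ)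
  have hint := integrableOn_Ioi_deriv_of_nonneg' hd hpos ht
  have hval := integral_Ioi_of_hasDerivAt_of_nonneg' hd hpos ht
  have h2 : ∫⁻ r in Set.Ioi (0 : ℝ), ENNReal.ofReal r * ENNReal.ofReal (1 / (r ^ 2 + a) ^ 2)
      = ENNReal.ofReal (1 / (2 * a)) := by
    have h3 : ∫⁻ r in Set.Ioi (0 : ℝ), ENNReal.ofReal r * ENNReal.ofReal (1 / (r ^ 2 + a) ^ 2)
        = ∫⁻ r in Set.Ioi (0 : ℝ), ENNReal.ofReal (r * (1 / (r ^ 2 + a) ^ 2)) := by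
      refine setLIntegral_congr_fun measurableSet_Ioi (fun r hr => ?_)
      exact (ENNReal.ofReal_mul (le_of_lt hr)).symm
    rw [h3, ← ofReal_integral_eq_lintegral_ofReal hint
      ((ae_restrict_iff' measurableSet_Ioi).2 (ae_of_all _ hpos)), hval]
    congr 1
    field_simp
    norm_num
  rw [h2, ← ENNReal.ofReal_mul (by positivity)]
  congr 1
  field_simp

lemma disc_lintegral (a R : ℝ) (ha : 0 < a) (hR : 0 < R) (S : Set (ℝ × ℝ)) (hS : MeasurableSet S)
    (hSR : ∀ k ∈ S, k.1 ^ 2 + k.2 ^ 2 ≤ R ^ 2) :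
    ∫⁻ k in S, ENNReal.ofReal (1 / (k.1 ^ 2 + k.2 ^ 2 + a)) ≤
      ENNReal.ofReal (Real.pi * Real.log ((R ^ 2 + a) / a)) := by
  set g : ℝ → ENNReal := (Set.Iic (R ^ 2)).indicator (fun s => ENNReal.ofReal (1 / (s + a))) with hgdef
  have hg : Measurable g := Measurable.indicator (by fun_prop) measurableSet_Iic
  have h1 : ∫⁻ k in S, ENNReal.ofReal (1 / (k.1 ^ 2 + k.2 ^ 2 + a)) ≤
      ∫⁻ k : ℝ × ℝ, g (k.1 ^ 2 + k.2 ^ 2) := by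
    refine le_trans (setLIntegral_mono' hS fun k hk => ?_) (setLIntegral_le_lintegral S _)
    rw [hgdef, Set.indicator_of_mem (by exact hSR k hk)]
  refine h1.trans ?_
  rw [radial_lintegral g hg]
  have hd : ∀ r ∈ Set.uIcc (0 : ℝ) R, HasDerivAt (fun r : ℝ => (1 / 2) * Real.log (r ^ 2 + a))
      (r * (1 / (r ^ 2 + a))) r := by
    intro r _
    have hne : r ^ 2 + a ≠ 0 := by positivity
    have := ((((hasDerivAt_pow 2 r).add_const a).log hne).const_mul ((1 / 2) : ℝ))
    refine this.congr_deriv ?_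
    field_simp
    norm_num
  have hc : Continuous (fun r : ℝ => r * (1 / (r ^ 2 + a))) := by
    refine continuous_id.mul (continuous_const.div (by fun_prop) ?_)
    intro r
    positivity
  have hval := intervalIntegral.integral_eq_sub_of_hasDerivAt hd (hc.intervalIntegrable 0 R)
  rw [intervalIntegral.integral_of_le hR.le] at hval
  have h2 : ∫⁻ r in Set.Ioi (0 : ℝ), ENNReal.ofReal r * g (r ^ 2) ≤
      ENNReal.ofReal (1 / 2 * Real.log ((R ^ 2 + a) / a)) := by
    have h3 : ∫⁻ r in Set.Ioi (0 : ℝ), ENNReal.ofReal r * g (r ^ 2) ≤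
        ∫⁻ r in Set.Ioc (0 : ℝ) R, ENNReal.ofReal (r * (1 / (r ^ 2 + a))) := by
      rw [← lintegral_indicator measurableSet_Ioi, ← lintegral_indicator measurableSet_Ioc]
      refine lintegral_mono fun r => ?_
      by_cases hr : 0 < r
      · rw [Set.indicator_of_mem (by exact hr)]
        by_cases hr2 : r ≤ R
        · rw [Set.indicator_of_mem (by exact ⟨hr, hr2⟩), ENNReal.ofReal_mul hr.le]
          gcongr
          rw [hgdef]
          exact Set.indicator_le_self _ _ _
        · have : r ^ 2 ∉ Set.Iic (R ^ 2) := by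
            simp only [Set.mem_Iic, not_le] at hr2 ⊢
            gcongr
          rw [hgdef, Set.indicator_of_notMem this]
          simp
      · rw [Set.indicator_of_notMem (by simpa using hr)]
        simp
    refine h3.trans ?_
    rw [← ofReal_integral_eq_lintegral_ofReal
      (hc.integrableOn_Icc.mono_set Set.Ioc_subset_Icc_self)
      ((ae_restrict_iff' measurableSet_Ioc).2 (ae_of_all _ fun r hr => by
        have : 0 < r := hr.1
        positivity)), hval]
    refine le_of_eq ?_
    rw [Real.log_div (by positivity) (by positivity)]
    congr 1
    simp
    ring
  calc _ ≤ ENNReal.ofReal (2 * Real.pi) * ENNReal.ofReal (1 / 2 * Real.log ((R ^ 2 + a) / a)) := by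
        gcongr
    _ = _ := by
        rw [← ENNReal.ofReal_mul (by positivity)]
        congr 1
        ring

lemma sin_sq_lower (t : ℝ) : t ^ 2 - t ^ 4 ≤ Real.sin t ^ 2 := by
  wlog ht : 0 ≤ t
  · have := this (-t) (by linarith)
    simpa [Even.neg_pow (show Even 4 by decide)] using this
  by_cases h : t ≤ 1
  · have h1 := Real.sin_ge_sub_cube ht
    have h2 : 0 ≤ t - t ^ 3 / 6 := by nlinarith [mul_nonneg ht ht, pow_nonneg ht 3]
    have h3 : (t - t ^ 3 / 6) ^ 2 ≤ Real.sin t ^ 2 := by gcongr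
    nlinarith [pow_nonneg ht 4, pow_nonneg ht 6]
  · have : 1 ≤ t ^ 2 := by nlinarith
    nlinarith [sq_nonneg (Real.sin t), mul_nonneg (sq_nonneg t) (sub_nonneg.2 this)]

lemma sin_sq_lower2 (t : ℝ) (ht : |t| ≤ Real.pi / 2) :
    4 / Real.pi ^ 2 * t ^ 2 ≤ Real.sin t ^ 2 := by
  have h := Real.mul_abs_le_abs_sin ht
  have h2 : (2 / Real.pi * |t|) ^ 2 ≤ |Real.sin t| ^ 2 := by gcongr
  rw [mul_pow, sq_abs, sq_abs] at h2
  convert h2 using 2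
  ring

lemma sigma_bound (a ε : ℝ) (ha : 0 < a) (hε : 0 < ε) (k : ℝ × ℝ)
    (hk1 : |k.1| ≤ Real.pi / ε) (hk2 : |k.2| ≤ Real.pi / ε) :
    1 / (sigmaEps ε k + a) ≤ 1 / (k.1 ^ 2 + k.2 ^ 2 + a) + Real.pi ^ 2 * ε ^ 2 / 16 := by
  have hh : ∀ u : ℝ, |u| ≤ Real.pi / ε → |ε * u / 2| ≤ Real.pi / 2 := by
    intro u hu
    rw [abs_div, abs_mul, abs_of_pos hε, abs_of_pos (two_pos : (0 : ℝ) < 2)]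
    rw [le_div_iff₀ hε] at hu
    linarith
  have A1 := sin_sq_lower (ε * k.1 / 2)
  have A2 := sin_sq_lower (ε * k.2 / 2)
  have B1 := sin_sq_lower2 _ (hh _ hk1)
  have B2 := sin_sq_lower2 _ (hh _ hk2)
  set P := k.1 ^ 2 + k.2 ^ 2 with hP
  have hP0 : 0 ≤ P := by positivity
  have hs1 : P - ε ^ 2 / 4 * P ^ 2 ≤ sigmaEps ε k := by
    have : (4 / ε ^ 2) * ((ε * k.1 / 2) ^ 2 - (ε * k.1 / 2) ^ 4 +
        ((ε * k.2 / 2) ^ 2 - (ε * k.2 / 2) ^ 4)) ≤ sigmaEps ε k := by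
      unfold sigmaEps
      gcongr
    refine le_trans ?_ this
    have e : (4 / ε ^ 2) * ((ε * k.1 / 2) ^ 2 - (ε * k.1 / 2) ^ 4 +
        ((ε * k.2 / 2) ^ 2 - (ε * k.2 / 2) ^ 4)) = P - ε ^ 2 / 4 * (k.1 ^ 4 + k.2 ^ 4) := by
      rw [hP]
      field_simp
      ring
    rw [e]
    have : k.1 ^ 4 + k.2 ^ 4 ≤ P ^ 2 := by
      rw [hP]
      nlinarith [mul_nonneg (sq_nonneg k.1) (sq_nonneg k.2)]
    gcongr
  have hs2 : 4 / Real.pi ^ 2 * P ≤ sigmaEps ε k := by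
    have : (4 / ε ^ 2) * (4 / Real.pi ^ 2 * (ε * k.1 / 2) ^ 2 +
        4 / Real.pi ^ 2 * (ε * k.2 / 2) ^ 2) ≤ sigmaEps ε k := by
      unfold sigmaEps
      gcongr
    refine le_trans (le_of_eq ?_) this
    rw [hP]
    field_simp
    ring
  set s := sigmaEps ε k
  have hpi := Real.pi_pos
  have hs0 : 0 ≤ s := le_trans (by positivity) hs2
  have key : 4 / Real.pi ^ 2 * P ^ 2 ≤ (s + a) * (P + a) := by
    calc 4 / Real.pi ^ 2 * P ^ 2 = (4 / Real.pi ^ 2 * P) * P := by ring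
      _ ≤ (s + a) * (P + a) := by gcongr <;> linarith
  have e : 1 / (s + a) - 1 / (P + a) = (P - s) / ((s + a) * (P + a)) := by
    field_simp
    ring
  have : (P - s) / ((s + a) * (P + a)) ≤ Real.pi ^ 2 * ε ^ 2 / 16 := by
    rw [div_le_iff₀ (by positivity)]
    calc P - s ≤ ε ^ 2 / 4 * P ^ 2 := by linarith
      _ = Real.pi ^ 2 * ε ^ 2 / 16 * (4 / Real.pi ^ 2 * P ^ 2) := by field_simp; ring
      _ ≤ _ := by gcongr
  linarith

lemma green_bound (m : ℝ) (hm : 0 < m) (ε : ℝ) (h0 : 0 < ε) (h1 : ε ≤ 1) (x z : ℝ × ℝ) :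
    ‖latticeGreen m ε x z‖ ≤ 1 / (2 * Real.pi) ^ 4 * (Real.pi *
      (Real.pi * Real.log (((2 * Real.pi / ε) ^ 2 + m ^ 2) / m ^ 2) + Real.pi ^ 4 / 4)) := by
  have hpi := Real.pi_pos
  unfold latticeGreen
  rw [norm_mul, Complex.norm_real, Real.norm_of_nonneg (by positivity)]
  gcongr
  set S : Set (ℝ × ℝ) := Set.Icc (-(Real.pi / ε)) (Real.pi / ε) ×ˢ
              Set.Icc (-(Real.pi / ε)) (Real.pi / ε) with hSdef
  have hS : MeasurableSet S := measurableSet_Icc.prod measurableSet_Icc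
  have hσ : ∀ k, 0 ≤ sigmaEps ε k := fun k => by unfold sigmaEps; positivity
  have hσm : Measurable (sigmaEps ε) := by unfold sigmaEps; fun_prop
  have hlog : 0 ≤ Real.log (((2 * Real.pi / ε) ^ 2 + m ^ 2) / m ^ 2) := by
    apply Real.log_nonneg
    rw [le_div_iff₀ (by positivity)]
    nlinarith [sq_nonneg (2 * Real.pi / ε)]
  have hR : 0 ≤ Real.pi *
      (Real.pi * Real.log (((2 * Real.pi / ε) ^ 2 + m ^ 2) / m ^ 2) + Real.pi ^ 4 / 4) := by
    positivity
  rw [← ENNReal.ofReal_le_ofReal_iff hR, ofReal_norm]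
  have hn : ∀ y k : ℝ × ℝ, ‖Complex.exp (-Complex.I * ((x.1 * y.1 + x.2 * y.2) +
      (z.1 * k.1 + z.2 * k.2))) /
          ((((y.1 ^ 2 + y.2 ^ 2) + sigmaEps ε k + m ^ 2) ^ 2 : ℝ) : ℂ)‖ₑ =
      ENNReal.ofReal (1 / (y.1 ^ 2 + y.2 ^ 2 + (sigmaEps ε k + m ^ 2)) ^ 2) := by
    intro y k
    rw [← ofReal_norm, norm_div, Complex.norm_real, Real.norm_of_nonneg (by positivity),
      Complex.norm_exp]
    congr 2
    · simp
    · ring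
  calc _ ≤ ∫⁻ y : ℝ × ℝ, ∫⁻ k in S,
        ENNReal.ofReal (1 / (y.1 ^ 2 + y.2 ^ 2 + (sigmaEps ε k + m ^ 2)) ^ 2) := by
        refine (enorm_integral_le_lintegral_enorm _).trans (lintegral_mono fun y => ?_)
        refine (enorm_integral_le_lintegral_enorm _).trans (lintegral_mono fun k => ?_)
        exact (hn y k).le
    _ = ∫⁻ k in S, ∫⁻ y : ℝ × ℝ,
        ENNReal.ofReal (1 / (y.1 ^ 2 + y.2 ^ 2 + (sigmaEps ε k + m ^ 2)) ^ 2) := by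
        apply lintegral_lintegral_swap
        apply Measurable.aemeasurable
        simp only [Function.uncurry_def]
        fun_prop
    _ = ∫⁻ k in S, ENNReal.ofReal (Real.pi / (sigmaEps ε k + m ^ 2)) := by
        refine lintegral_congr fun k => ?_
        have := hσ k
        exact plane_lintegral _ (by positivity)
    _ ≤ ∫⁻ k in S, ENNReal.ofReal Real.pi * (ENNReal.ofReal (1 / (k.1 ^ 2 + k.2 ^ 2 + m ^ 2)) +
          ENNReal.ofReal (Real.pi ^ 2 * ε ^ 2 / 16)) := by
        refine setLIntegral_mono' hS fun k hk => ?_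
        rw [← ENNReal.ofReal_add (by positivity) (by positivity), ← ENNReal.ofReal_mul hpi.le]
        apply ENNReal.ofReal_le_ofReal
        have := sigma_bound (m ^ 2) ε (by positivity) h0 k (abs_le.2 hk.1) (abs_le.2 hk.2)
        calc Real.pi / (sigmaEps ε k + m ^ 2) = Real.pi * (1 / (sigmaEps ε k + m ^ 2)) := by ring
          _ ≤ _ := by gcongr
    _ = ENNReal.ofReal Real.pi * ((∫⁻ k in S, ENNReal.ofReal (1 / (k.1 ^ 2 + k.2 ^ 2 + m ^ 2))) +
          ENNReal.ofReal (Real.pi ^ 2 * ε ^ 2 / 16) * volume S) := by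
        rw [lintegral_const_mul _ (by fun_prop), lintegral_add_right _ (by fun_prop),
          setLIntegral_const]
    _ ≤ ENNReal.ofReal Real.pi * (ENNReal.ofReal
          (Real.pi * Real.log (((2 * Real.pi / ε) ^ 2 + m ^ 2) / m ^ 2)) +
          ENNReal.ofReal (Real.pi ^ 4 / 4)) := by
        gcongr
        · refine disc_lintegral (m ^ 2) (2 * Real.pi / ε) (by positivity) (by positivity) S hS fun k hk => ?_
          have a1 : k.1 ^ 2 ≤ (Real.pi / ε) ^ 2 := sq_le_sq' hk.1.1 hk.1.2
          have a2 : k.2 ^ 2 ≤ (Real.pi / ε) ^ 2 := sq_le_sq' hk.2.1 hk.2.2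
          have : (2 * Real.pi / ε) ^ 2 = 4 * (Real.pi / ε) ^ 2 := by ring
          nlinarith [sq_nonneg (Real.pi / ε)]
        · rw [hSdef, Measure.volume_eq_prod, Measure.prod_prod, Real.volume_Icc,
            ← ENNReal.ofReal_mul (by rw [sub_neg_eq_add]; positivity),
            ← ENNReal.ofReal_mul (by positivity)]
          apply ENNReal.ofReal_le_ofReal
          apply le_of_eq
          field_simp
          ring
    _ = _ := by
        rw [← ENNReal.ofReal_add (by positivity) (by positivity), ← ENNReal.ofReal_mul hpi.le]

/-- Theorem 3.2: for every `m > 0` and `C > 2/(4π)²` there is `D ≥ 0` such that, for all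
`ε ∈ (0,1]`, `x ∈ ℝ²` and `z = (εn₁, εn₂) ∈ εℤ²` (with `(x,z) ≠ 0`, where the claimed
bound is trivially `+∞` otherwise),
`|G_ε(x,z)| ≤ C log₊(1/(min(√(|x|²+|z|²), ε))) + D`. -/
theorem stmt_1 (m : ℝ) (hm : 0 < m) (C : ℝ) (hC : 2 / (4 * Real.pi) ^ 2 < C) :
    ∃ D : ℝ, 0 ≤ D ∧
      ∀ ε : ℝ, ε ∈ Set.Ioc (0 : ℝ) 1 → ∀ x : ℝ × ℝ, ∀ n : ℤ × ℤ,
        (x ≠ 0 ∨ n ≠ 0) →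
        ‖latticeGreen m ε x (ε * (n.1 : ℝ), ε * (n.2 : ℝ))‖ ≤
          C * max (Real.log (1 /
              min (Real.sqrt (x.1 ^ 2 + x.2 ^ 2 + (ε * (n.1 : ℝ)) ^ 2 + (ε * (n.2 : ℝ)) ^ 2))
                ε)) 0 + D := by
  have hpi := Real.pi_pos
  set K := (2 * Real.pi) ^ 2 / m ^ 2 + 1 with hK
  have hK1 : 1 ≤ K := by
    rw [hK]
    have : 0 ≤ (2 * Real.pi) ^ 2 / m ^ 2 := by positivity
    linarith
  have hlogK := Real.log_nonneg hK1
  refine ⟨1 / (2 * Real.pi) ^ 4 * (Real.pi * (Real.pi * Real.log K + Real.pi ^ 4 / 4)),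
    by positivity, ?_⟩
  rintro ε ⟨h0, h1⟩ x n hxn
  refine (green_bound m hm ε h0 h1 x _).trans ?_
  set r := Real.sqrt (x.1 ^ 2 + x.2 ^ 2 + (ε * (n.1 : ℝ)) ^ 2 + (ε * (n.2 : ℝ)) ^ 2) with hr
  have hrpos : 0 < r := by
    apply Real.sqrt_pos.2
    rcases hxn with h | h
    · by_cases hx1 : x.1 = 0
      · have hx2 : x.2 ≠ 0 := fun h2 => h (Prod.ext hx1 h2)
        positivity
      · positivity
    · by_cases hn1 : n.1 = 0
      · have hn2 : (n.2 : ℝ) ≠ 0 := by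
          exact_mod_cast fun h2 => h (Prod.ext hn1 h2)
        positivity
      · have hn2 : (n.1 : ℝ) ≠ 0 := by exact_mod_cast hn1
        positivity
  have hmin : 0 < min r ε := lt_min hrpos h0
  have hL : Real.log (1 / ε) ≤ max (Real.log (1 / min r ε)) 0 := by
    refine le_trans (Real.log_le_log (by positivity) ?_) (le_max_left _ _)
    exact one_div_le_one_div_of_le hmin (min_le_right _ _)
  have hL0 : 0 ≤ Real.log (1 / ε) := by
    apply Real.log_nonneg
    rw [le_div_iff₀ h0]
    linarith
  have hb : Real.log (((2 * Real.pi / ε) ^ 2 + m ^ 2) / m ^ 2) ≤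
      2 * Real.log (1 / ε) + Real.log K := by
    have e : 2 * Real.log (1 / ε) + Real.log K = Real.log ((1 / ε) ^ 2 * K) := by
      rw [Real.log_mul (by positivity) (by positivity), Real.log_pow]
      norm_num
    rw [e]
    apply Real.log_le_log (by positivity)
    have : 1 ≤ (1 / ε) ^ 2 := by
      apply one_le_pow₀
      rw [le_div_iff₀ h0]
      linarith
    have e2 : ((2 * Real.pi / ε) ^ 2 + m ^ 2) / m ^ 2 =
        (1 / ε) ^ 2 * ((2 * Real.pi) ^ 2 / m ^ 2) + 1 := by
      field_simp
    rw [e2, hK]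
    linarith
  calc _ ≤ 1 / (2 * Real.pi) ^ 4 * (Real.pi *
        (Real.pi * (2 * Real.log (1 / ε) + Real.log K) + Real.pi ^ 4 / 4)) := by gcongr
    _ = 2 / (4 * Real.pi) ^ 2 * Real.log (1 / ε) +
        1 / (2 * Real.pi) ^ 4 * (Real.pi * (Real.pi * Real.log K + Real.pi ^ 4 / 4)) := by
        field_simp
        ring
    _ ≤ _ := by
        have hC0 : 0 ≤ C := le_trans (by positivity) hC.le
        gcongr
end

section
/- For every m > 0 there exists a constant C₂ > 0, independent of ε, such that for all ε ∈ (0,1] and all (x,z) ∈ ℝ² × ℝ², |Ḡ_ε(x,z) − G̃_ε(x,z)| ≤ C₂. -/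
open MeasureTheory

/-- The extended lattice Green function
`Ḡ_ε(x,z) = (2π)⁻⁴ ∫_{ℝ⁴} [sin²(εk₁/2)sin²(εk₂/2)/(ε⁴k₁²k₂²)] e^{-i(x·y+z·k)}
(|y|² + σ_ε(k) + m²)⁻² dy dk`. -/
noncomputable def GbarEps (m ε : ℝ) (x z : ℝ × ℝ) : ℂ :=
  ((1 / (2 * Real.pi) ^ 4 : ℝ) : ℂ) *
    ∫ y : ℝ × ℝ, ∫ k : ℝ × ℝ,
      ((Real.sin (ε * k.1 / 2) ^ 2 * Real.sin (ε * k.2 / 2) ^ 2 /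
          (ε ^ 4 * k.1 ^ 2 * k.2 ^ 2) : ℝ) : ℂ) *
        Complex.exp (-Complex.I * ((x.1 * y.1 + x.2 * y.2) + (z.1 * k.1 + z.2 * k.2))) /
        ((((y.1 ^ 2 + y.2 ^ 2) + sigmaEps ε k + m ^ 2) ^ 2 : ℝ) : ℂ)

/-- The smoothed continuum Green function
`G̃_ε(x,z) = (2π)⁻⁴ ∫_{ℝ⁴} [sin²(εk₁/2)sin²(εk₂/2)/(ε⁴k₁²k₂²)] e^{-i(x·y+z·k)}
(|y|² + |k|² + m²)⁻² dy dk`. -/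
noncomputable def GtildeEps (m ε : ℝ) (x z : ℝ × ℝ) : ℂ :=
  ((1 / (2 * Real.pi) ^ 4 : ℝ) : ℂ) *
    ∫ y : ℝ × ℝ, ∫ k : ℝ × ℝ,
      ((Real.sin (ε * k.1 / 2) ^ 2 * Real.sin (ε * k.2 / 2) ^ 2 /
          (ε ^ 4 * k.1 ^ 2 * k.2 ^ 2) : ℝ) : ℂ) *
        Complex.exp (-Complex.I * ((x.1 * y.1 + x.2 * y.2) + (z.1 * k.1 + z.2 * k.2))) /
        ((((y.1 ^ 2 + y.2 ^ 2) + (k.1 ^ 2 + k.2 ^ 2) + m ^ 2) ^ 2 : ℝ) : ℂ)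

lemma aux_sin (p : ℝ) : p ^ 2 - 4 * Real.sin (p / 2) ^ 2 ≤ (p ^ 2) ^ 2 / 4 := by
  have key : ∀ q : ℝ, 0 ≤ q → (2*q) ^ 2 - 4 * Real.sin q ^ 2 ≤ ((2*q) ^ 2) ^ 2 / 4 := by
    intro q hq
    by_cases h1 : q ≤ 1
    · rcases hq.eq_or_lt with h0 | h0
      · subst h0; simp
      · have h := Real.sin_gt_sub_cube h0
        have h2 : 0 ≤ q - q ^ 3 / 6 := by nlinarith [pow_le_one₀ hq h1 (n := 2)]
        have h4 : (q - q ^ 3 / 6) ^ 2 ≤ Real.sin q ^ 2 := pow_le_pow_left₀ h2 h.le 2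
        nlinarith [sq_nonneg (q^3), sq_nonneg (q^2)]
    · push Not at h1
      nlinarith [sq_nonneg (Real.sin q), sq_nonneg (q), mul_pos (by linarith : 0 < q) (by linarith : 0 < q), mul_nonneg (sq_nonneg q) (by nlinarith : 0 ≤ q^2 - 1)]
  have h := key |p / 2| (abs_nonneg _)
  have e : (2 * |p/2|)^2 = p^2 := by rw [mul_pow, sq_abs]; ring
  have e2 : Real.sin |p/2| ^ 2 = Real.sin (p/2) ^ 2 := by
    rcases abs_cases (p/2) with ⟨h, _⟩ | ⟨h, _⟩ <;> rw [h]
    rw [Real.sin_neg]; ring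
  rwa [e, e2] at h

lemma aux_sin_le (p : ℝ) : 4 * Real.sin (p / 2) ^ 2 ≤ p ^ 2 := by
  have := Real.abs_sin_le_abs (x := p/2)
  have h := sq_le_sq.mpr this
  nlinarith

/-- one-dimensional bounds -/
lemma aux_g (p : ℝ) (hp : p ≠ 0) : Real.sin (p / 2) ^ 2 / p ^ 2 ≤ 2 / (1 + p ^ 2) := by
  have h := aux_sin_le p
  have h1 := Real.sin_sq_le_one (p/2)
  have : 0 < p ^ 2 := by positivity
  rw [div_le_div_iff₀ this (by positivity)]
  nlinarith

lemma aux_f (p : ℝ) (hp : p ≠ 0) :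
    (p ^ 2 - 4 * Real.sin (p / 2) ^ 2) / (p ^ 2) ^ 2 ≤ 2 / (1 + p ^ 2) := by
  have h := aux_sin p
  have : 0 < p ^ 2 := by positivity
  rw [div_le_div_iff₀ (by positivity) (by positivity)]
  nlinarith [sq_nonneg (Real.sin (p/2)), mul_nonneg (sq_nonneg (Real.sin (p/2))) this.le]

/-- half of the main pointwise estimate -/
lemma aux_half (p q a b : ℝ) (hp : p ≠ 0) (hq : q ≠ 0) (ha0 : 0 < a)
    (ha : 4 * (Real.sin (p / 2) ^ 2 + Real.sin (q / 2) ^ 2) ≤ a) (hb : p ^ 2 + q ^ 2 ≤ b) :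
    Real.sin (p / 2) ^ 2 * Real.sin (q / 2) ^ 2 / (p ^ 2 * q ^ 2) *
      ((p ^ 2 - 4 * Real.sin (p / 2) ^ 2) / (a * b)) ≤ 1 / ((1 + p ^ 2) * (1 + q ^ 2)) := by
  have hp2 : 0 < p ^ 2 := by positivity
  have hq2 : 0 < q ^ 2 := by positivity
  have hb0 : 0 < b := by linarith
  have h0 := aux_sin_le p
  have hf := aux_f p hp
  have hg := aux_g q hq
  set S := Real.sin (p / 2) ^ 2 with hS
  set T := Real.sin (q / 2) ^ 2 with hT
  have hS0 : 0 ≤ S := sq_nonneg _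
  have hT0 : 0 ≤ T := sq_nonneg _
  have h1 : S / a ≤ 1 / 4 := by
    rw [div_le_div_iff₀ ha0 (by norm_num)]; linarith
  have h2 : (p ^ 2 - 4 * S) / (p ^ 2 * b) ≤ 2 / (1 + p ^ 2) := by
    refine le_trans ?_ hf
    apply div_le_div_of_nonneg_left (by linarith) (by positivity)
    nlinarith
  have h20 : 0 ≤ (p ^ 2 - 4 * S) / (p ^ 2 * b) := div_nonneg (by linarith) (by positivity)
  calc S * T / (p ^ 2 * q ^ 2) * ((p ^ 2 - 4 * S) / (a * b))
      = (S / a) * ((p ^ 2 - 4 * S) / (p ^ 2 * b)) * (T / q ^ 2) := by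
        field_simp
    _ ≤ (1/4) * (2 / (1 + p ^ 2)) * (2 / (1 + q ^ 2)) := by
        apply mul_le_mul _ hg (by positivity) (by positivity)
        exact mul_le_mul h1 h2 h20 (by norm_num)
    _ = _ := by field_simp; norm_num

/-- the weight -/
noncomputable def wEps (ε : ℝ) (k : ℝ × ℝ) : ℝ :=
  Real.sin (ε * k.1 / 2) ^ 2 * Real.sin (ε * k.2 / 2) ^ 2 / (ε ^ 4 * k.1 ^ 2 * k.2 ^ 2)

lemma wEps_nonneg (ε : ℝ) (k : ℝ × ℝ) : 0 ≤ wEps ε k := by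
  unfold wEps
  have : ε ^ 4 = (ε ^ 2) ^ 2 := by ring
  rw [this]; positivity

lemma sigmaEps_nonneg (ε : ℝ) (k : ℝ × ℝ) : 0 ≤ sigmaEps ε k := by
  unfold sigmaEps; positivity

lemma sigmaEps_le (ε : ℝ) (hε : 0 < ε) (k : ℝ × ℝ) : sigmaEps ε k ≤ k.1 ^ 2 + k.2 ^ 2 := by
  unfold sigmaEps
  have h1 := aux_sin_le (ε * k.1)
  have h2 := aux_sin_le (ε * k.2)
  rw [div_mul_eq_mul_div, div_le_iff₀ (by positivity)]
  nlinarith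

lemma wEps_zero (ε : ℝ) (k : ℝ × ℝ) (h : ¬ (k.1 ≠ 0 ∧ k.2 ≠ 0)) : wEps ε k = 0 := by
  unfold wEps
  by_cases h1 : k.1 = 0
  · simp [h1]
  · have : k.2 = 0 := by tauto
    simp [this]

lemma wEps_le (ε : ℝ) (hε : 0 < ε) (k : ℝ × ℝ) :
    wEps ε k ≤ 4 * ((1 + (ε * k.1) ^ 2)⁻¹ * (1 + (ε * k.2) ^ 2)⁻¹) := by
  by_cases h : k.1 ≠ 0 ∧ k.2 ≠ 0
  · obtain ⟨h1, h2⟩ := h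
    have a1 := aux_g (ε * k.1) (by positivity)
    have a2 := aux_g (ε * k.2) (by positivity)
    calc wEps ε k = (Real.sin (ε * k.1 / 2) ^ 2 / (ε * k.1) ^ 2) *
          (Real.sin (ε * k.2 / 2) ^ 2 / (ε * k.2) ^ 2) := by
            unfold wEps; rw [div_mul_div_comm]; congr 1; ring
      _ ≤ (2 / (1 + (ε * k.1) ^ 2)) * (2 / (1 + (ε * k.2) ^ 2)) :=
          mul_le_mul a1 a2 (by positivity) (by positivity)
      _ = _ := by rw [div_eq_mul_inv, div_eq_mul_inv]; ring
  · rw [wEps_zero ε k h]; positivity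

lemma main_pt (m ε : ℝ) (hm : 0 < m) (hε : 0 < ε) (k : ℝ × ℝ) :
    wEps ε k * ((k.1 ^ 2 + k.2 ^ 2 - sigmaEps ε k) /
      ((sigmaEps ε k + m ^ 2) * (k.1 ^ 2 + k.2 ^ 2 + m ^ 2))) ≤
      2 * ε ^ 2 * ((1 + (ε * k.1) ^ 2)⁻¹ * (1 + (ε * k.2) ^ 2)⁻¹) := by
  by_cases h : k.1 ≠ 0 ∧ k.2 ≠ 0
  · obtain ⟨h1, h2⟩ := h
    have hs := sigmaEps_nonneg ε k
    have hsig : ε ^ 2 * sigmaEps ε k =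
      4 * (Real.sin (ε * k.1 / 2) ^ 2 + Real.sin (ε * k.2 / 2) ^ 2) := by
      unfold sigmaEps; field_simp
    have ha0 : 0 < ε ^ 2 * (sigmaEps ε k + m ^ 2) := by positivity
    have ha : 4 * (Real.sin (ε * k.1 / 2) ^ 2 + Real.sin (ε * k.2 / 2) ^ 2)
        ≤ ε ^ 2 * (sigmaEps ε k + m ^ 2) := by
      rw [← hsig]; nlinarith [sq_nonneg (ε * m)]
    have hb : (ε * k.1) ^ 2 + (ε * k.2) ^ 2 ≤ ε ^ 2 * (k.1 ^ 2 + k.2 ^ 2 + m ^ 2) := by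
      nlinarith [sq_nonneg (ε * m)]
    have A := aux_half (ε * k.1) (ε * k.2) _ _ (by positivity) (by positivity) ha0 ha hb
    have B := aux_half (ε * k.2) (ε * k.1) _ (ε ^ 2 * (k.1 ^ 2 + k.2 ^ 2 + m ^ 2)) (by positivity) (by positivity) ha0
      (by linarith) (by linarith)
    have hw : wEps ε k = Real.sin (ε * k.1 / 2) ^ 2 * Real.sin (ε * k.2 / 2) ^ 2 /
        ((ε * k.1) ^ 2 * (ε * k.2) ^ 2) := by
      unfold wEps; congr 1; ring
    have hw2 : Real.sin (ε * k.2 / 2) ^ 2 * Real.sin (ε * k.1 / 2) ^ 2 /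
        ((ε * k.2) ^ 2 * (ε * k.1) ^ 2) = wEps ε k := by
      rw [hw, mul_comm, mul_comm ((ε * k.2) ^ 2)]
    rw [← hw] at A
    rw [hw2] at B
    have e : wEps ε k * ((k.1 ^ 2 + k.2 ^ 2 - sigmaEps ε k) /
      ((sigmaEps ε k + m ^ 2) * (k.1 ^ 2 + k.2 ^ 2 + m ^ 2))) =
      ε ^ 2 * (wEps ε k * (((ε * k.1) ^ 2 - 4 * Real.sin (ε * k.1 / 2) ^ 2) /
        (ε ^ 2 * (sigmaEps ε k + m ^ 2) * (ε ^ 2 * (k.1 ^ 2 + k.2 ^ 2 + m ^ 2)))) +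
        wEps ε k * (((ε * k.2) ^ 2 - 4 * Real.sin (ε * k.2 / 2) ^ 2) /
        (ε ^ 2 * (sigmaEps ε k + m ^ 2) * (ε ^ 2 * (k.1 ^ 2 + k.2 ^ 2 + m ^ 2))))) := by
      rw [← mul_add, ← add_div]
      have : (ε * k.1) ^ 2 - 4 * Real.sin (ε * k.1 / 2) ^ 2 +
          ((ε * k.2) ^ 2 - 4 * Real.sin (ε * k.2 / 2) ^ 2) =
          ε ^ 2 * (k.1 ^ 2 + k.2 ^ 2 - sigmaEps ε k) := by
        linear_combination hsig
      rw [this]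
      have hb0 : 0 < k.1 ^ 2 + k.2 ^ 2 + m ^ 2 := by positivity
      have ha1 : 0 < sigmaEps ε k + m ^ 2 := by positivity
      field_simp
    rw [e]
    calc _ ≤ ε ^ 2 * (1 / ((1 + (ε * k.1) ^ 2) * (1 + (ε * k.2) ^ 2)) +
          1 / ((1 + (ε * k.2) ^ 2) * (1 + (ε * k.1) ^ 2))) :=
          mul_le_mul_of_nonneg_left (add_le_add A B) (by positivity)
      _ = _ := by field_simp; ring
  · rw [wEps_zero ε k h, zero_mul]; positivity

/-! integrals -/

lemma int_c (c : ℝ) (hc : 0 < c) : Integrable (fun t : ℝ => (1 + (c * t) ^ 2)⁻¹) :=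
  integrable_inv_one_add_sq.comp_mul_left' hc.ne'

lemma val_c (c : ℝ) (hc : 0 < c) : ∫ t : ℝ, (1 + (c * t) ^ 2)⁻¹ = c⁻¹ * Real.pi := by
  rw [Measure.integral_comp_mul_left (fun t : ℝ => (1 + t ^ 2)⁻¹) c, integral_univ_inv_one_add_sq,
    abs_of_pos (inv_pos.mpr hc), smul_eq_mul]

lemma int_cc (c : ℝ) (hc : 0 < c) :
    Integrable (fun k : ℝ × ℝ => (1 + (c * k.1) ^ 2)⁻¹ * (1 + (c * k.2) ^ 2)⁻¹) :=
  (int_c c hc).mul_prod (int_c c hc)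

lemma val_cc (c : ℝ) (hc : 0 < c) :
    ∫ k : ℝ × ℝ, (1 + (c * k.1) ^ 2)⁻¹ * (1 + (c * k.2) ^ 2)⁻¹ = Real.pi ^ 2 / c ^ 2 := by
  have := integral_prod_mul (μ := (volume : Measure ℝ)) (ν := (volume : Measure ℝ))
    (fun t : ℝ => (1 + (c * t) ^ 2)⁻¹) (fun t : ℝ => (1 + (c * t) ^ 2)⁻¹)
  rw [val_c c hc] at this
  rw [Measure.volume_eq_prod, this]
  field_simp

lemma fun_a (a : ℝ) (ha : 0 < a) : (fun y : ℝ × ℝ => ((y.1 ^ 2 + a) * (y.2 ^ 2 + a))⁻¹) =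
    fun y : ℝ × ℝ => (a ^ 2)⁻¹ * ((1 + ((Real.sqrt a)⁻¹ * y.1) ^ 2)⁻¹ *
      (1 + ((Real.sqrt a)⁻¹ * y.2) ^ 2)⁻¹) := by
  funext y
  rw [← mul_inv, ← mul_inv]
  congr 1
  rw [mul_pow, mul_pow, inv_pow, Real.sq_sqrt ha.le]
  field_simp
  ring

lemma int_a (a : ℝ) (ha : 0 < a) :
    Integrable (fun y : ℝ × ℝ => ((y.1 ^ 2 + a) * (y.2 ^ 2 + a))⁻¹) := by
  rw [fun_a a ha]
  exact (int_cc _ (by positivity)).const_mul _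

lemma val_a (a : ℝ) (ha : 0 < a) :
    ∫ y : ℝ × ℝ, ((y.1 ^ 2 + a) * (y.2 ^ 2 + a))⁻¹ = Real.pi ^ 2 / a := by
  rw [fun_a a ha, integral_const_mul, val_cc _ (by positivity), inv_pow, Real.sq_sqrt ha.le]
  field_simp

lemma aux_A (r s a : ℝ) (ha : 0 < a) :
    ((r ^ 2 + s ^ 2 + a) ^ 2)⁻¹ ≤ ((r ^ 2 + a) * (s ^ 2 + a))⁻¹ := by
  apply inv_anti₀ (by positivity)
  rw [sq (r ^ 2 + s ^ 2 + a)]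
  apply mul_le_mul <;> nlinarith [sq_nonneg r, sq_nonneg s]

/-- the integrand with general symbol -/
noncomputable def FF (m ε : ℝ) (x z : ℝ × ℝ) (τ : ℝ × ℝ → ℝ) (q : (ℝ × ℝ) × (ℝ × ℝ)) : ℂ :=
  ((wEps ε q.2 : ℝ) : ℂ) *
        Complex.exp (-Complex.I * ((x.1 * q.1.1 + x.2 * q.1.2) + (z.1 * q.2.1 + z.2 * q.2.2))) /
        ((((q.1.1 ^ 2 + q.1.2 ^ 2) + τ q.2 + m ^ 2) ^ 2 : ℝ) : ℂ)

lemma norm_phase (x z y k : ℝ × ℝ) :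
    ‖Complex.exp (-Complex.I * ((x.1 * y.1 + x.2 * y.2) + (z.1 * k.1 + z.2 * k.2)))‖ = 1 := by
  rw [Complex.norm_exp]
  simp

lemma FF_integrable (m ε : ℝ) (hm : 0 < m) (hε : 0 < ε) (x z : ℝ × ℝ) (τ : ℝ × ℝ → ℝ)
    (hτ : Measurable τ) (hτ0 : ∀ k, 0 ≤ τ k) :
    Integrable (FF m ε x z τ) ((volume : Measure (ℝ × ℝ)).prod (volume : Measure (ℝ × ℝ))) := by
  have hI := (int_a (m ^ 2) (by positivity)).mul_prod ((int_cc ε hε).const_mul 4)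
  refine hI.mono' ?_ ?_
  · apply Measurable.aestronglyMeasurable
    unfold FF wEps
    fun_prop
  · refine Filter.Eventually.of_forall fun q => ?_
    unfold FF
    rw [norm_div, norm_mul, norm_phase, mul_one, Complex.norm_real, Complex.norm_real,
      Real.norm_of_nonneg (wEps_nonneg _ _), Real.norm_of_nonneg (sq_nonneg _),
      div_eq_mul_inv, mul_comm]
    refine mul_le_mul ?_ (wEps_le ε hε q.2) (wEps_nonneg _ _) (by positivity)
    refine le_trans ?_ (aux_A q.1.1 q.1.2 (m ^ 2) (by positivity))
    apply inv_anti₀ (by positivity)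
    have := hτ0 q.2
    apply pow_le_pow_left₀ (by positivity)
    linarith

lemma diff_bound (A B : ℝ) (hA : 0 < A) (hAB : A ≤ B) :
    |(A ^ 2)⁻¹ - (B ^ 2)⁻¹| ≤ 2 * (B - A) / B * (A ^ 2)⁻¹ := by
  have hB : 0 < B := by linarith
  rw [abs_of_nonneg (sub_nonneg.mpr (inv_anti₀ (by positivity) (pow_le_pow_left₀ hA.le hAB 2)))]
  have : 2 * (B - A) / B * (A ^ 2)⁻¹ - ((A ^ 2)⁻¹ - (B ^ 2)⁻¹) = (B - A) ^ 2 / (A ^ 2 * B ^ 2) := by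
    field_simp; ring
  have h2 : 0 ≤ (B - A) ^ 2 / (A ^ 2 * B ^ 2) := by positivity
  linarith

lemma FF_diff (m ε : ℝ) (hm : 0 < m) (hε : 0 < ε) (x z y k : ℝ × ℝ) :
    ‖FF m ε x z (sigmaEps ε) (y, k) - FF m ε x z (fun k => k.1 ^ 2 + k.2 ^ 2) (y, k)‖ ≤
      wEps ε k * (2 * (k.1 ^ 2 + k.2 ^ 2 - sigmaEps ε k) / (k.1 ^ 2 + k.2 ^ 2 + m ^ 2)) *
        ((y.1 ^ 2 + (sigmaEps ε k + m ^ 2)) * (y.2 ^ 2 + (sigmaEps ε k + m ^ 2)))⁻¹ := by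
  have hs := sigmaEps_nonneg ε k
  have hl := sigmaEps_le ε hε k
  have hA : 0 < y.1 ^ 2 + y.2 ^ 2 + sigmaEps ε k + m ^ 2 := by positivity
  have hD := diff_bound (y.1 ^ 2 + y.2 ^ 2 + sigmaEps ε k + m ^ 2)
    (y.1 ^ 2 + y.2 ^ 2 + (k.1 ^ 2 + k.2 ^ 2) + m ^ 2) hA (by linarith)
  unfold FF
  simp only
  rw [div_eq_mul_inv, div_eq_mul_inv, ← mul_sub, norm_mul, norm_mul, norm_phase, mul_one,
    ← Complex.ofReal_inv, ← Complex.ofReal_inv, ← Complex.ofReal_sub, Complex.norm_real,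
    Complex.norm_real, Real.norm_of_nonneg (wEps_nonneg _ _), Real.norm_eq_abs, mul_assoc]
  refine mul_le_mul_of_nonneg_left (hD.trans ?_) (wEps_nonneg _ _)
  have hAA := aux_A y.1 y.2 (sigmaEps ε k + m ^ 2) (by positivity)
  rw [← add_assoc] at hAA
  refine mul_le_mul ?_ hAA (by positivity) (div_nonneg (by linarith) (by positivity))
  have e : y.1 ^ 2 + y.2 ^ 2 + (k.1 ^ 2 + k.2 ^ 2) + m ^ 2 -
    (y.1 ^ 2 + y.2 ^ 2 + sigmaEps ε k + m ^ 2) = k.1 ^ 2 + k.2 ^ 2 - sigmaEps ε k := by ring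
  rw [e]
  apply div_le_div_of_nonneg_left (by linarith) (by positivity)
  nlinarith [sq_nonneg y.1, sq_nonneg y.2]

lemma key_bound (m ε : ℝ) (hm : 0 < m) (hε : 0 < ε) (x z : ℝ × ℝ) :
    ‖(∫ y : ℝ × ℝ, ∫ k : ℝ × ℝ, FF m ε x z (sigmaEps ε) (y, k)) -
      ∫ y : ℝ × ℝ, ∫ k : ℝ × ℝ, FF m ε x z (fun k => k.1 ^ 2 + k.2 ^ 2) (y, k)‖
      ≤ 4 * Real.pi ^ 4 := by
  have I1 := FF_integrable m ε hm hε x z (sigmaEps ε) (by unfold sigmaEps; fun_prop)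
    (sigmaEps_nonneg ε)
  have I2 := FF_integrable m ε hm hε x z (fun k => k.1 ^ 2 + k.2 ^ 2) (by fun_prop)
    (fun k => by positivity)
  rw [← integral_prod _ I1, ← integral_prod _ I2, ← integral_sub I1 I2,
    integral_prod_symm (fun a => FF m ε x z (sigmaEps ε) a -
      FF m ε x z (fun k => k.1 ^ 2 + k.2 ^ 2) a) (I1.sub I2)]
  have hval : ∫ k : ℝ × ℝ, (4 * Real.pi ^ 2 * ε ^ 2) *
      ((1 + (ε * k.1) ^ 2)⁻¹ * (1 + (ε * k.2) ^ 2)⁻¹) = 4 * Real.pi ^ 4 := by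
    rw [integral_const_mul, val_cc ε hε]; field_simp
  rw [← hval]
  refine norm_integral_le_of_norm_le ((int_cc ε hε).const_mul _)
    (Filter.Eventually.of_forall fun k => ?_)
  have ha : 0 < sigmaEps ε k + m ^ 2 := by
    have := sigmaEps_nonneg ε k
    positivity
  refine (norm_integral_le_of_norm_le ((int_a _ ha).const_mul _)
    (Filter.Eventually.of_forall fun y => FF_diff m ε hm hε x z y k)).trans ?_
  rw [integral_const_mul, val_a _ ha]
  have := main_pt m ε hm hε k
  have hb0 : 0 < k.1 ^ 2 + k.2 ^ 2 + m ^ 2 := by positivity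
  calc _ = 2 * Real.pi ^ 2 * (wEps ε k * ((k.1 ^ 2 + k.2 ^ 2 - sigmaEps ε k) /
      ((sigmaEps ε k + m ^ 2) * (k.1 ^ 2 + k.2 ^ 2 + m ^ 2)))) := by field_simp
    _ ≤ 2 * Real.pi ^ 2 * _ := mul_le_mul_of_nonneg_left this (by positivity)
    _ = _ := by ring

/-- Theorem 3.4: for every `m > 0` there is a constant `C₂ > 0`, independent of `ε`, such
that `|Ḡ_ε(x,z) − G̃_ε(x,z)| ≤ C₂` for all `ε ∈ (0,1]` and `(x,z) ∈ ℝ² × ℝ²`. -/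
theorem stmt_2 (m : ℝ) (hm : 0 < m) :
    ∃ C₂ : ℝ, 0 < C₂ ∧
      ∀ ε : ℝ, ε ∈ Set.Ioc (0 : ℝ) 1 → ∀ x z : ℝ × ℝ,
        ‖GbarEps m ε x z - GtildeEps m ε x z‖ ≤ C₂ := by
  refine ⟨1 / (2 * Real.pi) ^ 4 * (4 * Real.pi ^ 4), by positivity, fun ε hε x z => ?_⟩
  have h := key_bound m ε hm hε.1 x z
  have e : GbarEps m ε x z - GtildeEps m ε x z = ((1 / (2 * Real.pi) ^ 4 : ℝ) : ℂ) *
      ((∫ y : ℝ × ℝ, ∫ k : ℝ × ℝ, FF m ε x z (sigmaEps ε) (y, k)) -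
      ∫ y : ℝ × ℝ, ∫ k : ℝ × ℝ, FF m ε x z (fun k => k.1 ^ 2 + k.2 ^ 2) (y, k)) := by
    rw [mul_sub]; rfl
  rw [e, norm_mul, Complex.norm_real, Real.norm_of_nonneg (by positivity)]
  exact mul_le_mul_of_nonneg_left h (by positivity)
end

section
/- For every m > 0 and every constant C > 2/(4π)² there exists D ≥ 0, independent of ε, such that for all ε ∈ (0,1] and all (x,z) ∈ ℝ² × ℝ², |Ḡ_ε(x,z)| ≤ C·log₊( 1/( max( √(|x|²+|z|²), ε ) ) ) + D. -/
open MeasureTheory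

noncomputable def sker (κ : ℝ) : ℝ := Real.sin (κ / 2) ^ 2 / κ ^ 2

lemma sker_nonneg (κ : ℝ) : 0 ≤ sker κ := by unfold sker; positivity

lemma sker_meas : Measurable sker := by unfold sker; fun_prop

lemma sker_le_quarter (κ : ℝ) : sker κ ≤ 1 / 4 := by
  unfold sker
  rcases eq_or_ne κ 0 with rfl | h
  · norm_num
  · rw [div_le_iff₀ (by positivity)]
    have := sq_le_sq' (neg_le_of_abs_le (Real.abs_sin_le_abs (x := κ/2))) (le_of_abs_le (Real.abs_sin_le_abs (x := κ/2)))
    rw [sq_abs] at this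
    nlinarith

lemma sker_le_inv_sq (κ : ℝ) : sker κ ≤ 1 / κ ^ 2 := by
  unfold sker
  gcongr
  exact Real.sin_sq_le_one _

lemma sker_le (κ : ℝ) : sker κ ≤ 2 * (1 + κ ^ 2)⁻¹ := by
  rw [← div_eq_mul_inv, le_div_iff₀ (by positivity)]
  have h1 := sker_le_quarter κ
  have h2 : sker κ * κ ^ 2 ≤ 1 := by
    rcases eq_or_ne κ 0 with rfl | h
    · norm_num
    · have := sker_le_inv_sq κ
      rwa [le_div_iff₀ (by positivity)] at this
  nlinarith

lemma sker_integrable : Integrable sker := by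
  refine (integrable_inv_one_add_sq.const_mul 2).mono' sker_meas.aestronglyMeasurable ?_
  refine Filter.Eventually.of_forall fun κ => ?_
  rw [Real.norm_of_nonneg (sker_nonneg κ)]
  exact sker_le κ

lemma sker_integral_le : ∫ κ, sker κ ≤ 7 := by
  calc ∫ κ, sker κ ≤ ∫ κ : ℝ, 2 * (1 + κ ^ 2)⁻¹ :=
        integral_mono sker_integrable (integrable_inv_one_add_sq.const_mul 2) sker_le
    _ = 2 * Real.pi := by rw [integral_const_mul, integral_univ_inv_one_add_sq]
    _ ≤ 7 := by linarith [Real.pi_lt_d2]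

lemma cn_hasSum : HasSum (fun n : ℤ => (if n = 0 then (1/4 : ℝ) else 0) + 1 / Real.pi ^ 2 * (1 / (n : ℝ) ^ 2)) (7 / 12) := by
  have h1 : HasSum (fun n : ℤ => (if n = 0 then (1/4 : ℝ) else 0)) (1/4) := by
    exact hasSum_ite_eq 0 (1/4)
  have h2 : HasSum (fun n : ℤ => (1 / (n : ℝ) ^ 2)) (Real.pi ^ 2 / 6 + Real.pi ^ 2 / 6 - 1 / ((0 : ℤ) : ℝ) ^ 2) := by
    apply HasSum.of_nat_of_neg (f := fun n : ℤ => (1 / (n : ℝ) ^ 2))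
    · simpa using hasSum_zeta_two
    · simpa using hasSum_zeta_two
  have h3 := h1.add (h2.mul_left (1 / Real.pi ^ 2))
  convert h3 using 1
  have := Real.pi_ne_zero
  field_simp
  norm_num
  ring

/-- Periodization bound. -/
lemma sker_periodic (g : ℝ → ℝ) (hg : Continuous g) (hg0 : ∀ x, 0 ≤ g x)
    (hp : Function.Periodic g (2 * Real.pi)) (M : ℝ) (hM : ∀ x, g x ≤ M) :
    Integrable (fun κ => sker κ * g κ) ∧
    ∫ κ, sker κ * g κ ≤ 7 / 12 * ∫ κ in (-Real.pi)..Real.pi, g κ := by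
  have hpi := Real.pi_pos
  have hInt : Integrable (fun κ => sker κ * g κ) := by
    refine sker_integrable.mul_bdd (c := M) hg.aestronglyMeasurable ?_
    exact Filter.Eventually.of_forall fun x => by rw [Real.norm_of_nonneg (hg0 x)]; exact hM x
  refine ⟨hInt, ?_⟩
  set F : ℝ → ℝ := fun κ => sker κ * g κ with hF
  have hInt2 : Integrable (fun u => F (2 * Real.pi * u)) := hInt.comp_mul_left' (by positivity)
  have e1 : ∫ u, F (2 * Real.pi * u) = (2 * Real.pi)⁻¹ * ∫ κ, F κ := by
    rw [Measure.integral_comp_mul_left, abs_of_pos (by positivity), smul_eq_mul]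
  have e2 : ∫ u in (-(1/2 : ℝ))..(1/2), g (2 * Real.pi * u) = (2 * Real.pi)⁻¹ * ∫ κ in (-Real.pi)..Real.pi, g κ := by
    rw [intervalIntegral.integral_comp_mul_left _ (by positivity), smul_eq_mul]
    rw [show 2 * Real.pi * -(1/2) = -Real.pi by ring, show 2 * Real.pi * (1/2) = Real.pi by ring]
  have hs := hInt2.hasSum_intervalIntegral (-(1/2))
  have hper : ∀ n : ℤ, ∫ u in (-(1/2 : ℝ) + n)..(-(1/2) + n + 1), g (2 * Real.pi * u) = ∫ u in (-(1/2 : ℝ))..(1/2), g (2 * Real.pi * u) := by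
    intro n
    have hp1 : Function.Periodic (fun u => g (2 * Real.pi * u)) 1 := by
      intro u
      simp only [mul_add, mul_one]
      exact hp _
    rw [hp1.intervalIntegral_add_eq (-(1/2 : ℝ) + n) (-(1/2))]
    norm_num
  have hle : ∀ n : ℤ, ∫ u in (-(1/2 : ℝ) + n)..(-(1/2) + n + 1), F (2 * Real.pi * u) ≤
      ((if n = 0 then (1/4 : ℝ) else 0) + 1 / Real.pi ^ 2 * (1 / (n : ℝ) ^ 2)) * ∫ u in (-(1/2 : ℝ))..(1/2), g (2 * Real.pi * u) := by
    intro n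
    rw [← hper n, ← intervalIntegral.integral_const_mul]
    apply intervalIntegral.integral_mono_on (by linarith) hInt2.intervalIntegrable
    · exact (Continuous.intervalIntegrable (by fun_prop) _ _)
    · intro u hu
      simp only [hF]
      apply mul_le_mul_of_nonneg_right _ (hg0 _)
      by_cases hn : n = 0
      · subst hn
        simpa using sker_le_quarter _
      · simp only [hn, if_false, zero_add]
        refine (sker_le_inv_sq _).trans ?_
        have hn2 : (n : ℝ) ^ 2 ≤ 4 * u ^ 2 := by
          rcases lt_or_gt_of_ne hn with h | h
          · have : (n : ℝ) ≤ -1 := by exact_mod_cast (by omega : n ≤ -1)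
            nlinarith [hu.1, hu.2]
          · have : (1 : ℝ) ≤ n := by exact_mod_cast h
            nlinarith [hu.1, hu.2]
        have hn3 : (0 : ℝ) < (n : ℝ) ^ 2 := by
          have : (n : ℝ) ≠ 0 := by exact_mod_cast hn
          positivity
        rw [one_div_mul_one_div]
        · apply one_div_le_one_div_of_le (by positivity)
          nlinarith [sq_nonneg Real.pi, mul_le_mul_of_nonneg_left hn2 (sq_nonneg Real.pi)]
  have := hasSum_le hle hs (cn_hasSum.mul_right _)
  rw [e1, e2] at this
  have h7 : (0:ℝ) < (2 * Real.pi)⁻¹ := by positivity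
  rw [show 7 / 12 * ((2 * Real.pi)⁻¹ * ∫ κ in (-Real.pi)..Real.pi, g κ) = (2 * Real.pi)⁻¹ * (7 / 12 * ∫ κ in (-Real.pi)..Real.pi, g κ) by ring] at this
  exact le_of_mul_le_mul_left this h7


noncomputable def Eker (τ κ : ℝ) : ℝ := Real.exp (-(4 * τ * Real.sin (κ / 2) ^ 2))

lemma Eker_pos (τ κ : ℝ) : 0 < Eker τ κ := Real.exp_pos _

lemma Eker_le_one {τ : ℝ} (hτ : 0 ≤ τ) (κ : ℝ) : Eker τ κ ≤ 1 := by
  unfold Eker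
  rw [Real.exp_le_one_iff]
  have : 0 ≤ 4 * τ * Real.sin (κ / 2) ^ 2 := by positivity
  linarith

lemma Eker_cont (τ : ℝ) : Continuous (Eker τ) := by unfold Eker; fun_prop

lemma Eker_deriv (τ κ : ℝ) : HasDerivAt (Eker τ) (-(2 * τ * Real.sin κ * Eker τ κ)) κ := by
  unfold Eker
  have h0 : HasDerivAt (fun κ : ℝ => κ / 2) (1 / 2) κ := (hasDerivAt_id κ).div_const 2
  have h1 : HasDerivAt (fun κ : ℝ => Real.sin (κ / 2)) (Real.cos (κ / 2) * (1 / 2)) κ := h0.sin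
  have h2 := (((h1.pow 2).const_mul (4 * τ)).neg).exp
  refine h2.congr_deriv ?_
  rw [show Real.sin κ = Real.sin (2 * (κ / 2)) by ring_nf, Real.sin_two_mul]
  simp only [Pi.neg_apply, Pi.pow_apply]
  push_cast
  ring

lemma Eker_periodic (τ : ℝ) : Function.Periodic (Eker τ) (2 * Real.pi) := by
  intro κ
  unfold Eker
  rw [show (κ + 2 * Real.pi) / 2 = κ / 2 + Real.pi by ring, Real.sin_add_pi, neg_sq]

noncomputable def Qker (τ ζ : ℝ) : ℂ :=
  ∫ κ : ℝ, ((sker κ * Eker τ κ : ℝ) : ℂ) * Complex.exp (-Complex.I * (ζ * κ))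

lemma norm_osc (ζ κ : ℝ) : ‖Complex.exp (-Complex.I * (ζ * κ))‖ = 1 := by
  rw [Complex.norm_exp]; simp

lemma Qker_norm_le_int (τ ζ : ℝ) : ‖Qker τ ζ‖ ≤ ∫ κ, sker κ * Eker τ κ := by
  unfold Qker
  refine (norm_integral_le_integral_norm _).trans (le_of_eq ?_)
  congr 1
  ext κ
  rw [norm_mul, norm_osc, mul_one, Complex.norm_real, Real.norm_of_nonneg]
  exact mul_nonneg (sker_nonneg κ) (Eker_pos τ κ).le

lemma sE_integrable {τ : ℝ} (hτ : 0 ≤ τ) : Integrable (fun κ => sker κ * Eker τ κ) :=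
  (sker_periodic _ (Eker_cont τ) (fun x => (Eker_pos τ x).le) (Eker_periodic τ) 1
    (Eker_le_one hτ)).1

lemma sE_int_le {τ : ℝ} (hτ : 0 ≤ τ) : ∫ κ, sker κ * Eker τ κ ≤ 7 := by
  refine le_trans ?_ sker_integral_le
  apply integral_mono (sE_integrable hτ) sker_integrable
  intro κ
  exact mul_le_of_le_one_right (sker_nonneg κ) (Eker_le_one hτ κ)

lemma Qker_le_const {τ : ℝ} (hτ : 0 ≤ τ) (ζ : ℝ) : ‖Qker τ ζ‖ ≤ 7 :=
  (Qker_norm_le_int τ ζ).trans (sE_int_le hτ)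

lemma Qker_le_sqrt {τ : ℝ} (hτ : 0 < τ) (ζ : ℝ) : ‖Qker τ ζ‖ ≤ √(Real.pi / τ) := by
  have hpi := Real.pi_pos
  refine (Qker_norm_le_int τ ζ).trans ?_
  refine (sker_periodic _ (Eker_cont τ) (fun x => (Eker_pos τ x).le) (Eker_periodic τ) 1
    (Eker_le_one hτ.le)).2.trans ?_
  have hb : 0 < 4 * τ / Real.pi ^ 2 := by positivity
  have hgi := integrable_exp_neg_mul_sq hb
  have h1 : ∫ κ in (-Real.pi)..Real.pi, Eker τ κ ≤
      ∫ κ in (-Real.pi)..Real.pi, Real.exp (-(4 * τ / Real.pi ^ 2) * κ ^ 2) := by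
    apply intervalIntegral.integral_mono_on (by linarith) ((Eker_cont τ).intervalIntegrable _ _)
      hgi.intervalIntegrable
    intro κ hκ
    unfold Eker
    apply Real.exp_le_exp.mpr
    have h2 : |κ / 2| ≤ Real.pi / 2 := by
      rw [abs_le]; constructor <;> linarith [hκ.1, hκ.2]
    have h3 := Real.mul_abs_le_abs_sin h2
    have h4 : (2 / Real.pi * |κ / 2|) ^ 2 ≤ |Real.sin (κ / 2)| ^ 2 :=
      pow_le_pow_left₀ (by positivity) h3 2
    rw [mul_pow, sq_abs, sq_abs] at h4
    have h5 : 4 * τ * ((2 / Real.pi) ^ 2 * (κ / 2) ^ 2) ≤ 4 * τ * Real.sin (κ / 2) ^ 2 := by gcongr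
    have h6 : 4 * τ * ((2 / Real.pi) ^ 2 * (κ / 2) ^ 2) = (4 * τ / Real.pi ^ 2) * κ ^ 2 := by
      field_simp
    linarith
  have h2 : ∫ κ in (-Real.pi)..Real.pi, Real.exp (-(4 * τ / Real.pi ^ 2) * κ ^ 2) ≤
      √(Real.pi / (4 * τ / Real.pi ^ 2)) := by
    rw [intervalIntegral.integral_of_le (by linarith), ← integral_gaussian]
    exact setIntegral_le_integral hgi (Filter.Eventually.of_forall fun x => (Real.exp_pos _).le)
  have h3 : √(Real.pi / (4 * τ / Real.pi ^ 2)) = Real.pi / 2 * √(Real.pi / τ) := by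
    rw [show Real.pi / (4 * τ / Real.pi ^ 2) = (Real.pi / 2) ^ 2 * (Real.pi / τ) by field_simp; norm_num,
      Real.sqrt_mul (by positivity), Real.sqrt_sq (by positivity)]
  have h4 := Real.sqrt_nonneg (Real.pi / τ)
  have h5 := Real.pi_lt_d2
  nlinarith [h1.trans (h2.trans_eq h3)]

/-- the regularised kernel -/
noncomputable def sreg (κ : ℝ) : ℝ := if κ = 0 then 1 / 4 else sker κ

noncomputable def sder (κ : ℝ) : ℝ := Real.sin κ / (2 * κ ^ 2) - (1 - Real.cos κ) / κ ^ 3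

lemma sker_eq (κ : ℝ) : sker κ = (1 - Real.cos κ) / (2 * κ ^ 2) := by
  unfold sker
  rw [Real.sin_sq_eq_half_sub, show 2 * (κ / 2) = κ by ring]
  rcases eq_or_ne κ 0 with rfl | h
  · simp
  · field_simp

lemma sreg_ae : sreg =ᵐ[volume] sker := by
  have : ∀ᵐ κ : ℝ, κ ≠ 0 := by simp [ae_iff]
  filter_upwards [this] with κ h
  simp [sreg, h]

lemma sder_le (κ : ℝ) : |sder κ| ≤ 5 * (1 + κ ^ 2)⁻¹ := by
  rw [← div_eq_mul_inv, le_div_iff₀ (by positivity)]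
  rcases eq_or_ne κ 0 with rfl | h
  · simp [sder]
  have ha : 0 < |κ| := abs_pos.mpr h
  rcases le_total |κ| 1 with h1 | h1
  · have hs := Real.sin_bound h1
    have hc := Real.cos_bound h1
    have e : sder κ = (κ * (Real.sin κ - (κ - κ ^ 3 / 6)) / 2 + (Real.cos κ - (1 - κ ^ 2 / 2)) - κ ^ 4 / 12) / κ ^ 3 := by
      unfold sder
      field_simp
      ring
    have h2 : |sder κ| ≤ 1 := by
      rw [e, abs_div, div_le_one (by positivity), abs_pow]
      have t1 : |κ * (Real.sin κ - (κ - κ ^ 3 / 6)) / 2| ≤ |κ| ^ 6 / 200 := by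
        rw [abs_div, abs_mul, abs_two]
        nlinarith
      have t2 : |κ ^ 4 / 12| ≤ |κ| ^ 4 / 12 := by
        rw [abs_div, abs_pow]; norm_num
      have t3 : |κ| ^ 4 ≤ |κ| ^ 3 := pow_le_pow_of_le_one ha.le h1 (by norm_num)
      have t4 : |κ| ^ 6 ≤ |κ| ^ 3 := pow_le_pow_of_le_one ha.le h1 (by norm_num)
      have t5 : 0 < |κ| ^ 3 := by positivity
      rw [abs_le] at *
      constructor <;> linarith [t1.1, t1.2, t2.1, t2.2, hc.1, hc.2]
    have h3 : κ ^ 2 ≤ 1 := by rw [← sq_abs]; nlinarith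
    nlinarith [abs_nonneg (sder κ)]
  · have hk : 1 ≤ κ ^ 2 := by rw [← sq_abs]; nlinarith
    have h2 : |sder κ| ≤ (5 / 2) / κ ^ 2 := by
      unfold sder
      refine (abs_sub _ _).trans ?_
      have t1 : |Real.sin κ / (2 * κ ^ 2)| ≤ (1 / 2) / κ ^ 2 := by
        rw [abs_div, abs_of_pos (show 0 < 2 * κ ^ 2 by positivity), div_div]
        exact div_le_div_of_nonneg_right (Real.abs_sin_le_one κ) (by positivity)
      have t2 : |(1 - Real.cos κ) / κ ^ 3| ≤ 2 / κ ^ 2 := by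
        rw [abs_div, abs_pow, ← sq_abs κ]
        apply div_le_div₀ (by norm_num)
        · rw [abs_le]; constructor <;> linarith [Real.cos_le_one κ, Real.neg_one_le_cos κ]
        · positivity
        · exact pow_le_pow_right₀ h1 (by norm_num)
      calc _ ≤ (1 / 2) / κ ^ 2 + 2 / κ ^ 2 := add_le_add t1 t2
        _ = _ := by ring
    rw [le_div_iff₀ (by positivity)] at h2
    nlinarith [abs_nonneg (sder κ)]

lemma sder_meas : Measurable sder := by unfold sder; fun_prop

lemma sder_integrable : Integrable sder := by
  refine (integrable_inv_one_add_sq.const_mul 5).mono' sder_meas.aestronglyMeasurable ?_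
  exact Filter.Eventually.of_forall fun κ => sder_le κ

lemma sreg_deriv (κ : ℝ) : HasDerivAt sreg (sder κ) κ := by
  rcases eq_or_ne κ 0 with rfl | h
  · have e0 : sder 0 = 0 := by simp [sder]
    rw [e0, hasDerivAt_iff_isLittleO]
    have hO : (fun x : ℝ => sreg x - sreg 0 - (x - 0) • (0 : ℝ)) =O[nhds 0] fun x => x ^ 2 := by
      apply Asymptotics.IsBigO.of_bound 1
      filter_upwards [Metric.ball_mem_nhds (0 : ℝ) one_pos] with x hx
      have hx1 : |x| ≤ 1 := by simpa using (Metric.mem_ball.mp hx).le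
      rcases eq_or_ne x 0 with rfl | hx0
      · simp
      · have hc := Real.cos_bound hx1
        simp only [smul_zero, sub_zero, Real.norm_eq_abs, one_mul]
        have e : sreg x - sreg 0 = -(Real.cos x - (1 - x ^ 2 / 2)) / (2 * x ^ 2) := by
          simp only [sreg, hx0, if_false, if_true, sker_eq]
          field_simp
          ring
        rw [e, abs_div, abs_neg, div_le_iff₀ (by positivity), abs_of_pos (show 0 < 2 * x ^ 2 by positivity),
          abs_of_nonneg (sq_nonneg x)]
        have : |x| ^ 4 = x ^ 2 * x ^ 2 := by rw [← sq_abs]; ring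
        rw [this] at hc
        nlinarith [mul_nonneg (sq_nonneg x) (sq_nonneg x)]
    refine hO.trans_isLittleO ?_
    simpa using Asymptotics.isLittleO_pow_id (𝕜 := ℝ) (n := 2) (by norm_num)
  · have h1 : HasDerivAt (fun x : ℝ => (1 - Real.cos x) / (2 * x ^ 2)) (sder κ) κ := by
      have := ((Real.hasDerivAt_cos κ).const_sub 1).div (((hasDerivAt_pow 2 κ).const_mul 2)) (by positivity)
      refine this.congr_deriv ?_
      unfold sder
      push_cast
      field_simp
    refine h1.congr_of_eventuallyEq ?_
    filter_upwards [isOpen_ne.mem_nhds h] with x hx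
    have hx : x ≠ 0 := hx
    simp [sreg, hx, sker_eq]

lemma sinE_int {τ : ℝ} (hτ : 0 ≤ τ) :
    ∫ κ in (-Real.pi)..Real.pi, 2 * τ * |Real.sin κ| * Eker τ κ ≤ 2 := by
  have hpi := Real.pi_pos
  have hc : Continuous fun κ => 2 * τ * |Real.sin κ| * Eker τ κ := by
    have := Eker_cont τ
    fun_prop
  have hc' : Continuous fun κ => 2 * τ * Real.sin κ * Eker τ κ := by
    have := Eker_cont τ
    fun_prop
  rw [← intervalIntegral.integral_add_adjacent_intervals (b := 0) (hc.intervalIntegrable _ _) (hc.intervalIntegrable _ _)]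
  have e1 : ∫ κ in (-Real.pi)..0, 2 * τ * |Real.sin κ| * Eker τ κ = Eker τ 0 - Eker τ (-Real.pi) := by
    rw [← intervalIntegral.integral_eq_sub_of_hasDerivAt (fun x _ => Eker_deriv τ x) (hc'.neg.intervalIntegrable _ _)]
    apply intervalIntegral.integral_congr
    intro κ hκ
    rw [Set.uIcc_of_le (by linarith)] at hκ
    have := Real.sin_nonpos_of_nonpos_of_neg_pi_le hκ.2 hκ.1
    simp only [abs_of_nonpos this]
    ring
  have e2 : ∫ κ in (0 : ℝ)..Real.pi, 2 * τ * |Real.sin κ| * Eker τ κ = Eker τ 0 - Eker τ Real.pi := by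
    rw [← neg_sub, ← intervalIntegral.integral_eq_sub_of_hasDerivAt (fun x _ => Eker_deriv τ x) (hc'.neg.intervalIntegrable _ _),
      ← intervalIntegral.integral_neg]
    apply intervalIntegral.integral_congr
    intro κ hκ
    rw [Set.uIcc_of_le (by linarith)] at hκ
    have := Real.sin_nonneg_of_nonneg_of_le_pi hκ.1 hκ.2
    simp only [abs_of_nonneg this]
    ring
  rw [e1, e2]
  linarith [Eker_le_one hτ 0, Eker_pos τ (-Real.pi), Eker_pos τ Real.pi]

lemma Qker_decay {τ : ℝ} (hτ : 0 ≤ τ) (ζ : ℝ) : |ζ| * ‖Qker τ ζ‖ ≤ 20 := by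
  have hper := sker_periodic (fun κ => 2 * τ * |Real.sin κ| * Eker τ κ)
    (by have := Eker_cont τ; fun_prop)
    (fun x => mul_nonneg (by positivity) (Eker_pos τ x).le)
    (by intro κ; simp only [Eker_periodic τ κ, Real.sin_add_two_pi]) (2 * τ)
    (fun x => by
      have h1 := Real.abs_sin_le_one x
      calc 2 * τ * |Real.sin x| * Eker τ x ≤ 2 * τ * 1 * 1 := by
            gcongr
            · exact (Eker_pos τ x).le
            · exact Eker_le_one hτ x
        _ = _ := by ring)
  set u : ℝ → ℂ := fun κ => ((sreg κ * Eker τ κ : ℝ) : ℂ) with hu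
  set u' : ℝ → ℂ := fun κ => ((sder κ * Eker τ κ + sreg κ * (-(2 * τ * Real.sin κ * Eker τ κ)) : ℝ) : ℂ) with hu'
  set v : ℝ → ℂ := fun κ => Complex.exp (-Complex.I * (ζ * κ)) with hv
  set v' : ℝ → ℂ := fun κ => -Complex.I * ζ * Complex.exp (-Complex.I * (ζ * κ)) with hv'
  have dU : ∀ x, HasDerivAt u (u' x) x := fun x =>
    ((sreg_deriv x).mul (Eker_deriv τ x)).ofReal_comp
  have dV : ∀ x, HasDerivAt v (v' x) x := by
    intro x
    have h1 : HasDerivAt (fun κ : ℝ => -Complex.I * (ζ * (κ : ℂ))) (-Complex.I * (ζ * 1)) x :=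
      (((hasDerivAt_id x).ofReal_comp).const_mul (ζ : ℂ)).const_mul (-Complex.I)
    convert h1.cexp using 1
    simp only [hv']
    ring
  have vc : Continuous v := by simp only [hv]; fun_prop
  have vn : ∀ x, ‖v x‖ = 1 := fun x => norm_osc ζ x
  have iu : Integrable u := by
    refine ((sE_integrable hτ).ofReal (𝕜 := ℂ)).congr ?_
    filter_upwards [sreg_ae] with κ h
    simp [hu, h]
  have iuR : Integrable (fun κ => |sder κ * Eker τ κ + sreg κ * (-(2 * τ * Real.sin κ * Eker τ κ))|) ∧ ∫ κ, |sder κ * Eker τ κ + sreg κ * (-(2 * τ * Real.sin κ * Eker τ κ))| ≤ 20 := by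
    have hdom : Integrable (fun κ : ℝ => 5 * (1 + κ ^ 2)⁻¹ + sker κ * (2 * τ * |Real.sin κ| * Eker τ κ)) :=
      (integrable_inv_one_add_sq.const_mul 5).add hper.1
    have hle : ∀ᵐ κ : ℝ, |sder κ * Eker τ κ + sreg κ * (-(2 * τ * Real.sin κ * Eker τ κ))| ≤ 5 * (1 + κ ^ 2)⁻¹ + sker κ * (2 * τ * |Real.sin κ| * Eker τ κ) := by
      filter_upwards [sreg_ae] with κ h
      rw [h]
      refine (abs_add_le _ _).trans (add_le_add ?_ (le_of_eq ?_))
      · rw [abs_mul, abs_of_pos (Eker_pos τ κ)]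
        exact (mul_le_of_le_one_right (abs_nonneg _) (Eker_le_one hτ κ)).trans (sder_le κ)
      · rw [abs_mul, abs_neg, abs_mul, abs_mul, abs_of_nonneg (sker_nonneg κ), abs_of_pos (Eker_pos τ κ),
          abs_of_nonneg (show 0 ≤ 2 * τ by positivity)]
    have hi : Integrable (fun κ => |sder κ * Eker τ κ + sreg κ * (-(2 * τ * Real.sin κ * Eker τ κ))|) := by
      refine hdom.mono' ?_ ?_
      · have := (Eker_cont τ).measurable
        have := sder_meas
        have h3 : Continuous sreg := continuous_iff_continuousAt.mpr fun x => (sreg_deriv x).continuousAt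
        have := h3.measurable
        apply Measurable.aestronglyMeasurable
        apply Measurable.abs
        fun_prop
      · filter_upwards [hle] with κ h
        rwa [Real.norm_eq_abs, abs_abs]
    refine ⟨hi, ?_⟩
    calc _ ≤ ∫ κ : ℝ, (5 * (1 + κ ^ 2)⁻¹ + sker κ * (2 * τ * |Real.sin κ| * Eker τ κ)) := integral_mono_ae hi hdom hle
      _ = 5 * Real.pi + ∫ κ, sker κ * (2 * τ * |Real.sin κ| * Eker τ κ) := by
        rw [integral_add (integrable_inv_one_add_sq.const_mul 5) hper.1, integral_const_mul, integral_univ_inv_one_add_sq]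
      _ ≤ 20 := by
        have h1 := hper.2
        have h2 := sinE_int hτ
        have h3 := Real.pi_lt_d2
        linarith
  have u'n : ∀ x, ‖u' x‖ = |sder x * Eker τ x + sreg x * (-(2 * τ * Real.sin x * Eker τ x))| := by
    intro x; simp only [hu', Complex.norm_real, Real.norm_eq_abs]
  have iu' : Integrable u' := by
    rw [← integrable_norm_iff]
    · simp only [u'n]; exact iuR.1
    · have := (Eker_cont τ).measurable
      have := sder_meas
      have h3 : Continuous sreg := continuous_iff_continuousAt.mpr fun x => (sreg_deriv x).continuousAt
      have := h3.measurable
      apply Measurable.aestronglyMeasurable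
      simp only [hu']
      apply Complex.measurable_ofReal.comp
      fun_prop
  have iuv : Integrable (u * v) := iu.mul_bdd (c := 1) vc.aestronglyMeasurable (Filter.Eventually.of_forall fun x => (vn x).le)
  have iu'v : Integrable (u' * v) := iu'.mul_bdd (c := 1) vc.aestronglyMeasurable (Filter.Eventually.of_forall fun x => (vn x).le)
  have e : u * v' = fun κ => (-Complex.I * ζ) * (u * v) κ := by
    ext κ
    simp only [hv', hv, Pi.mul_apply]
    ring
  have iuv' : Integrable (u * v') := by
    rw [e]; exact iuv.const_mul _
  have ibp := integral_mul_deriv_eq_deriv_mul_of_integrable (fun x _ => dU x) (fun x _ => dV x) iuv' iu'v iuv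
  have eQ : Qker τ ζ = ∫ κ, (u * v) κ := by
    unfold Qker
    apply integral_congr_ae
    filter_upwards [sreg_ae] with κ h
    simp [hu, hv, h]
  have eL : ∫ x, u x * v' x = (-Complex.I * ζ) * Qker τ ζ := by
    rw [eQ, ← integral_const_mul]
    exact integral_congr_ae (Filter.Eventually.of_forall fun κ => congrFun e κ)
  have : |ζ| * ‖Qker τ ζ‖ = ‖∫ x, u' x * v x‖ := by
    rw [← norm_neg (∫ x, u' x * v x), ← ibp, eL, norm_mul, norm_mul]
    simp
  rw [this]
  refine (norm_integral_le_integral_norm _).trans ?_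
  simp only [norm_mul, vn, mul_one, u'n]
  exact iuR.2


noncomputable def gk (t x y : ℝ) : ℂ :=
  Complex.exp (-Complex.I * (x * y)) * ((Real.exp (-t * y ^ 2) : ℝ) : ℂ)

noncomputable def pk (ε t z k : ℝ) : ℂ :=
  ((Real.sin (ε * k / 2) ^ 2 / (ε * k) ^ 2 *
    Real.exp (-(4 * (t / ε ^ 2) * Real.sin (ε * k / 2) ^ 2)) : ℝ) : ℂ) * Complex.exp (-Complex.I * (z * k))

lemma gk_norm (t x y : ℝ) : ‖gk t x y‖ = Real.exp (-t * y ^ 2) := by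
  unfold gk
  rw [norm_mul, norm_osc, one_mul, Complex.norm_real, Real.norm_of_nonneg (Real.exp_pos _).le]

lemma gk_integrable {t : ℝ} (ht : 0 < t) (x : ℝ) : Integrable (gk t x) := by
  rw [← integrable_norm_iff]
  · simp only [gk_norm]; exact integrable_exp_neg_mul_sq ht
  · apply Continuous.aestronglyMeasurable
    unfold gk; fun_prop

lemma gk_norm_int (t x : ℝ) : ∫ y, ‖gk t x y‖ = √(Real.pi / t) := by
  simp only [gk_norm]; exact integral_gaussian t

lemma gk_int {t : ℝ} (ht : 0 < t) (x : ℝ) :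
    ‖∫ y, gk t x y‖ = √(Real.pi / t) * Real.exp (-(x ^ 2 / (4 * t))) := by
  have h := fourierIntegral_gaussian (b := (t : ℂ)) (by simpa using ht) (-(x : ℂ))
  have e : ∀ y : ℝ, gk t x y = Complex.exp (Complex.I * -(x : ℂ) * y) * Complex.exp (-(t : ℂ) * (y : ℂ) ^ 2) := by
    intro y
    unfold gk
    push_cast
    congr 2
    ring
  simp only [e]
  rw [h, norm_mul]
  congr 1
  · rw [show (Real.pi : ℂ) / (t : ℂ) = ((Real.pi / t : ℝ) : ℂ) by push_cast; rfl,
      Complex.norm_cpow_eq_rpow_re_of_pos (by positivity), Real.sqrt_eq_rpow]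
    norm_num
  · rw [Complex.norm_exp]
    congr 1
    rw [show -(-(x : ℂ)) ^ 2 / (4 * (t : ℂ)) = ((-(x ^ 2 / (4 * t)) : ℝ) : ℂ) by push_cast; ring, Complex.ofReal_re]

lemma pk_eq {ε : ℝ} (hε : 0 < ε) (t z k : ℝ) : pk ε t z k =
    (fun κ : ℝ => ((sker κ * Eker (t / ε ^ 2) κ : ℝ) : ℂ) * Complex.exp (-Complex.I * ((z / ε : ℝ) * κ))) (ε * k) := by
  have : (ε : ℂ) ≠ 0 := by exact_mod_cast hε.ne'
  simp only [pk, sker, Eker]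
  congr 3
  push_cast
  field_simp

lemma pk_int {ε : ℝ} (hε : 0 < ε) (t z : ℝ) :
    ‖∫ k, pk ε t z k‖ = ε⁻¹ * ‖Qker (t / ε ^ 2) (z / ε)‖ := by
  simp only [pk_eq hε]
  rw [Measure.integral_comp_mul_left (fun κ : ℝ => ((sker κ * Eker (t / ε ^ 2) κ : ℝ) : ℂ) * Complex.exp (-Complex.I * ((z / ε : ℝ) * κ))), norm_smul, Real.norm_eq_abs, abs_abs, abs_of_pos (by positivity)]
  rfl

lemma pk_norm {ε : ℝ} (hε : 0 < ε) (t z k : ℝ) : ‖pk ε t z k‖ =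
    (fun κ : ℝ => sker κ * Eker (t / ε ^ 2) κ) (ε * k) := by
  rw [pk_eq hε]
  simp only
  rw [norm_mul, norm_osc, mul_one, Complex.norm_real, Real.norm_of_nonneg]
  exact mul_nonneg (sker_nonneg _) (Eker_pos _ _).le

lemma pk_integrable {ε t : ℝ} (hε : 0 < ε) (ht : 0 < t) (z : ℝ) : Integrable (pk ε t z) := by
  rw [← integrable_norm_iff]
  · simp only [pk_norm hε]
    exact (sE_integrable (by positivity)).comp_mul_left' hε.ne'
  · apply Measurable.aestronglyMeasurable
    unfold pk; fun_prop

lemma pk_norm_int {ε t : ℝ} (hε : 0 < ε) (ht : 0 < t) (z : ℝ) : ∫ k, ‖pk ε t z k‖ ≤ ε⁻¹ * 7 := by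
  simp only [pk_norm hε]
  rw [Measure.integral_comp_mul_left (fun κ : ℝ => sker κ * Eker (t / ε ^ 2) κ), abs_of_pos (by positivity), smul_eq_mul]
  have := sE_int_le (show 0 ≤ t / ε ^ 2 by positivity)
  gcongr

noncomputable def Fk (m ε : ℝ) (x z : ℝ × ℝ) (w : (ℝ × ℝ) × (ℝ × ℝ)) (t : ℝ) : ℂ :=
  ((t * Real.exp (-(m ^ 2 * t)) : ℝ) : ℂ) *
    ((gk t x.1 w.1.1 * gk t x.2 w.1.2) * (pk ε t z.1 w.2.1 * pk ε t z.2 w.2.2))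

lemma Fk_meas (m ε : ℝ) (x z : ℝ × ℝ) : Measurable (Function.uncurry (Fk m ε x z)) := by
  unfold Fk gk pk Function.uncurry; fun_prop

lemma exp_integrableOn {m : ℝ} (hm : 0 < m) : IntegrableOn (fun t => Real.exp (-(m ^ 2 * t))) (Set.Ioi 0) := by
  have := integrableOn_exp_mul_Ioi (a := -(m ^ 2)) (by simp; positivity) 0
  simpa [neg_mul] using this

lemma Fk_integrable {m ε : ℝ} (hm : 0 < m) (hε : 0 < ε) (x z : ℝ × ℝ) :
    Integrable (Function.uncurry (Fk m ε x z))
      ((volume : Measure ((ℝ × ℝ) × (ℝ × ℝ))).prod (volume.restrict (Set.Ioi (0 : ℝ)))) := by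
  have hmeas := (Fk_meas m ε x z).aestronglyMeasurable
    (μ := (volume : Measure ((ℝ × ℝ) × (ℝ × ℝ))).prod (volume.restrict (Set.Ioi (0 : ℝ))))
  rw [integrable_prod_iff' hmeas]
  constructor
  · refine (ae_restrict_iff' measurableSet_Ioi).mpr (Filter.Eventually.of_forall fun t ht => ?_)
    have ht : 0 < t := ht
    have h1 : Integrable (fun y : ℝ × ℝ => gk t x.1 y.1 * gk t x.2 y.2) :=
      (gk_integrable ht x.1).mul_prod (gk_integrable ht x.2)
    have h2 : Integrable (fun k : ℝ × ℝ => pk ε t z.1 k.1 * pk ε t z.2 k.2) :=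
      (pk_integrable hε ht z.1).mul_prod (pk_integrable hε ht z.2)
    exact (h1.mul_prod h2).const_mul ((t * Real.exp (-(m ^ 2 * t)) : ℝ) : ℂ)
  · refine Integrable.mono' (((exp_integrableOn hm).const_mul (Real.pi * (ε⁻¹ * 7) ^ 2))) ?_ ?_
    · exact hmeas.norm.prod_swap.integral_prod_right'
    · refine (ae_restrict_iff' measurableSet_Ioi).mpr (Filter.Eventually.of_forall fun t ht => ?_)
      have ht : 0 < t := ht
      rw [Real.norm_of_nonneg (integral_nonneg fun _ => norm_nonneg _)]
      have e : ∫ w : (ℝ × ℝ) × (ℝ × ℝ), ‖Function.uncurry (Fk m ε x z) (w, t)‖ =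
          (t * Real.exp (-(m ^ 2 * t))) * ((√(Real.pi / t) * √(Real.pi / t)) *
            ((∫ k, ‖pk ε t z.1 k‖) * (∫ k, ‖pk ε t z.2 k‖))) := by
        simp only [Function.uncurry, Fk, norm_mul]
        rw [integral_const_mul]
        congr 1
        · rw [Complex.norm_real, Real.norm_of_nonneg (by positivity)]
        · rw [Measure.volume_eq_prod,
            integral_prod_mul (fun y : ℝ × ℝ => ‖gk t x.1 y.1‖ * ‖gk t x.2 y.2‖) (fun k : ℝ × ℝ => ‖pk ε t z.1 k.1‖ * ‖pk ε t z.2 k.2‖),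
            Measure.volume_eq_prod,
            integral_prod_mul (fun y : ℝ => ‖gk t x.1 y‖) (fun y => ‖gk t x.2 y‖),
            integral_prod_mul (fun y : ℝ => ‖pk ε t z.1 y‖) (fun y => ‖pk ε t z.2 y‖),
            gk_norm_int, gk_norm_int]
      rw [e, Real.mul_self_sqrt (by positivity)]
      have h1 := pk_norm_int hε ht z.1
      have h2 := pk_norm_int hε ht z.2
      calc _ ≤ (t * Real.exp (-(m ^ 2 * t))) * (Real.pi / t * ((ε⁻¹ * 7) * (ε⁻¹ * 7))) := by
            gcongr
        _ = _ := by field_simp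

lemma Fk_int_w (m ε : ℝ) (x z : ℝ × ℝ) (t : ℝ) :
    ∫ w, Fk m ε x z w t = ((t * Real.exp (-(m ^ 2 * t)) : ℝ) : ℂ) *
      (((∫ y, gk t x.1 y) * ∫ y, gk t x.2 y) * ((∫ k, pk ε t z.1 k) * ∫ k, pk ε t z.2 k)) := by
  simp only [Fk]
  rw [integral_const_mul, Measure.volume_eq_prod,
    integral_prod_mul (fun y : ℝ × ℝ => gk t x.1 y.1 * gk t x.2 y.2) (fun k : ℝ × ℝ => pk ε t z.1 k.1 * pk ε t z.2 k.2),
    Measure.volume_eq_prod,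
    integral_prod_mul (fun y : ℝ => gk t x.1 y) (fun y => gk t x.2 y),
    integral_prod_mul (fun y : ℝ => pk ε t z.1 y) (fun y => pk ε t z.2 y)]

lemma int_t_exp {a : ℝ} (ha : 0 < a) : ∫ t in Set.Ioi (0 : ℝ), t * Real.exp (-(a * t)) = 1 / a ^ 2 := by
  have h := Real.integral_rpow_mul_exp_neg_mul_Ioi (a := 2) (by norm_num) ha
  have e : (2 : ℝ) - 1 = 1 := by norm_num
  simp only [e, Real.rpow_one] at h
  rw [h, Real.Gamma_two]
  norm_num

lemma Fk_int_t {m ε : ℝ} (hm : 0 < m) (x z y k : ℝ × ℝ) :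
    ∫ t in Set.Ioi (0 : ℝ), Fk m ε x z (y, k) t =
      ((Real.sin (ε * k.1 / 2) ^ 2 * Real.sin (ε * k.2 / 2) ^ 2 /
          (ε ^ 4 * k.1 ^ 2 * k.2 ^ 2) : ℝ) : ℂ) *
        Complex.exp (-Complex.I * ((x.1 * y.1 + x.2 * y.2) + (z.1 * k.1 + z.2 * k.2))) /
        ((((y.1 ^ 2 + y.2 ^ 2) + sigmaEps ε k + m ^ 2) ^ 2 : ℝ) : ℂ) := by
  set a := (y.1 ^ 2 + y.2 ^ 2) + sigmaEps ε k + m ^ 2 with ha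
  have ha0 : 0 < a := by
    have : 0 ≤ sigmaEps ε k := by unfold sigmaEps; positivity
    positivity
  set c : ℂ := ((Real.sin (ε * k.1 / 2) ^ 2 * Real.sin (ε * k.2 / 2) ^ 2 /
          (ε ^ 4 * k.1 ^ 2 * k.2 ^ 2) : ℝ) : ℂ) *
        Complex.exp (-Complex.I * ((x.1 * y.1 + x.2 * y.2) + (z.1 * k.1 + z.2 * k.2))) with hc
  have e : ∀ t, Fk m ε x z (y, k) t = c * ((t * Real.exp (-(a * t)) : ℝ) : ℂ) := by
    intro t
    have e1 : Real.exp (-(a * t)) = Real.exp (-(m ^ 2 * t)) * Real.exp (-t * y.1 ^ 2) * Real.exp (-t * y.2 ^ 2)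
        * Real.exp (-(4 * (t / ε ^ 2) * Real.sin (ε * k.1 / 2) ^ 2)) * Real.exp (-(4 * (t / ε ^ 2) * Real.sin (ε * k.2 / 2) ^ 2)) := by
      rw [← Real.exp_add, ← Real.exp_add, ← Real.exp_add, ← Real.exp_add]
      congr 1
      rw [ha, sigmaEps]
      ring
    have e2 : Complex.exp (-Complex.I * ((x.1 * y.1 + x.2 * y.2) + (z.1 * k.1 + z.2 * k.2))) =
        Complex.exp (-Complex.I * (x.1 * y.1)) * Complex.exp (-Complex.I * (x.2 * y.2)) * Complex.exp (-Complex.I * (z.1 * k.1)) * Complex.exp (-Complex.I * (z.2 * k.2)) := by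
      rw [← Complex.exp_add, ← Complex.exp_add, ← Complex.exp_add]
      congr 1
      ring
    have e3 : Real.sin (ε * k.1 / 2) ^ 2 * Real.sin (ε * k.2 / 2) ^ 2 / (ε ^ 4 * k.1 ^ 2 * k.2 ^ 2) =
        (Real.sin (ε * k.1 / 2) ^ 2 / (ε * k.1) ^ 2) * (Real.sin (ε * k.2 / 2) ^ 2 / (ε * k.2) ^ 2) := by
      rw [div_mul_div_comm]
      congr 1
      ring
    rw [hc, e1, e2, e3]
    simp only [Fk, gk, pk, Complex.ofReal_mul]
    ring
  simp only [e]
  rw [integral_const_mul, integral_complex_ofReal, int_t_exp ha0]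
  push_cast
  ring

lemma Gbar_eq {m ε : ℝ} (hm : 0 < m) (hε : 0 < ε) (x z : ℝ × ℝ) :
    GbarEps m ε x z = ((1 / (2 * Real.pi) ^ 4 : ℝ) : ℂ) *
      ∫ t in Set.Ioi (0 : ℝ), ((t * Real.exp (-(m ^ 2 * t)) : ℝ) : ℂ) *
      (((∫ y, gk t x.1 y) * ∫ y, gk t x.2 y) * ((∫ k, pk ε t z.1 k) * ∫ k, pk ε t z.2 k)) := by
  have hF := Fk_integrable hm hε x z
  simp only [← Fk_int_w]
  rw [← integral_integral_swap hF]
  unfold GbarEps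
  congr 1
  have h2 : Integrable (fun w => ∫ t in Set.Ioi (0 : ℝ), Fk m ε x z w t)
      ((volume : Measure (ℝ × ℝ)).prod (volume : Measure (ℝ × ℝ))) := hF.integral_prod_left
  refine Eq.trans ?_ (integral_prod _ h2).symm
  simp only [Fk_int_t hm]

lemma Gbar_norm_le {m ε : ℝ} (hm : 0 < m) (hε : 0 < ε) (x z : ℝ × ℝ) :
    ‖GbarEps m ε x z‖ ≤ 1 / (2 * Real.pi) ^ 4 * ∫ t in Set.Ioi (0 : ℝ),
      Real.pi * Real.exp (-(m ^ 2 * t)) * (Real.exp (-(x.1 ^ 2 / (4 * t))) * Real.exp (-(x.2 ^ 2 / (4 * t))))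
        * (‖∫ k, pk ε t z.1 k‖ * ‖∫ k, pk ε t z.2 k‖) := by
  have hpi := Real.pi_pos
  rw [Gbar_eq hm hε, norm_mul, Complex.norm_real, Real.norm_of_nonneg (by positivity)]
  gcongr
  refine (norm_integral_le_integral_norm _).trans (le_of_eq ?_)
  apply setIntegral_congr_fun measurableSet_Ioi
  intro t ht
  have ht : 0 < t := ht
  simp only
  rw [norm_mul, norm_mul, norm_mul, norm_mul, gk_int ht, gk_int ht, Complex.norm_real, Real.norm_of_nonneg (by positivity)]
  have : √(Real.pi / t) * √(Real.pi / t) = Real.pi / t := Real.mul_self_sqrt (by positivity)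
  calc _ = (t * (√(Real.pi / t) * √(Real.pi / t))) * Real.exp (-(m ^ 2 * t)) * (Real.exp (-(x.1 ^ 2 / (4 * t))) * Real.exp (-(x.2 ^ 2 / (4 * t))))
        * (‖∫ k, pk ε t z.1 k‖ * ‖∫ k, pk ε t z.2 k‖) := by ring
    _ = _ := by rw [this]; field_simp


lemma pk_le_sqrt {ε t : ℝ} (hε : 0 < ε) (ht : 0 < t) (z : ℝ) : ‖∫ k, pk ε t z k‖ ≤ √(Real.pi / t) := by
  rw [pk_int hε]
  have h := Qker_le_sqrt (show 0 < t / ε ^ 2 by positivity) (z / ε)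
  calc _ ≤ ε⁻¹ * √(Real.pi / (t / ε ^ 2)) := by gcongr
    _ = _ := by
      rw [show Real.pi / (t / ε ^ 2) = ε ^ 2 * (Real.pi / t) by field_simp,
        Real.sqrt_mul (by positivity), Real.sqrt_sq hε.le]
      field_simp

lemma pk_le_eps {ε t : ℝ} (hε : 0 < ε) (ht : 0 < t) (z : ℝ) : ε * ‖∫ k, pk ε t z k‖ ≤ 20 := by
  rw [pk_int hε, ← mul_assoc, mul_inv_cancel₀ hε.ne', one_mul]
  linarith [Qker_le_const (show 0 ≤ t / ε ^ 2 by positivity) (z / ε)]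

lemma pk_le_z {ε t : ℝ} (hε : 0 < ε) (ht : 0 < t) (z : ℝ) : |z| * ‖∫ k, pk ε t z k‖ ≤ 20 := by
  rw [pk_int hε]
  have := Qker_decay (show 0 ≤ t / ε ^ 2 by positivity) (z / ε)
  rw [abs_div, abs_of_pos hε] at this
  calc _ = |z| / ε * ‖Qker (t / ε ^ 2) (z / ε)‖ := by ring
    _ ≤ _ := this

lemma gauss_le {t : ℝ} (ht : 0 < t) (x : ℝ) : |x| * Real.exp (-(x ^ 2 / (4 * t))) ≤ √t := by
  have h1 := Real.add_one_le_exp (x ^ 2 / (4 * t))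
  have h2 : 0 < Real.exp (x ^ 2 / (4 * t)) := Real.exp_pos _
  rw [Real.exp_neg, ← div_eq_mul_inv, div_le_iff₀ h2]
  have hs : 0 < √t := Real.sqrt_pos.mpr ht
  have h3 : √t ^ 2 = t := Real.sq_sqrt ht.le
  have h4 : |x| ≤ √t * (x ^ 2 / (4 * t) + 1) := by
    have e : √t * (x ^ 2 / (4 * t) + 1) = (|x| ^ 2 / 4 + √t ^ 2) / √t := by
      rw [sq_abs]
      nth_rewrite 2 [← h3]
      field_simp
    rw [e, le_div_iff₀ hs]
    nlinarith [sq_nonneg (|x| / 2 - √t)]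
  exact h4.trans (by gcongr)

noncomputable def Ik (m ε : ℝ) (x z : ℝ × ℝ) (t : ℝ) : ℝ :=
  Real.pi * Real.exp (-(m ^ 2 * t)) * (Real.exp (-(x.1 ^ 2 / (4 * t))) * Real.exp (-(x.2 ^ 2 / (4 * t))))
        * (‖∫ k, pk ε t z.1 k‖ * ‖∫ k, pk ε t z.2 k‖)

lemma Ik_nonneg (m ε : ℝ) (x z : ℝ × ℝ) (t : ℝ) : 0 ≤ Ik m ε x z t := by
  have := Real.pi_pos
  unfold Ik; positivity

lemma exp_neg_div_le_one {t : ℝ} (ht : 0 < t) (x : ℝ) : Real.exp (-(x ^ 2 / (4 * t))) ≤ 1 := by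
  rw [Real.exp_le_one_iff]
  have : 0 ≤ x ^ 2 / (4 * t) := by positivity
  linarith

lemma Ik_le_one (m ε : ℝ) (hε : 0 < ε) (x z : ℝ × ℝ) {t : ℝ} (ht : 0 < t) :
    Ik m ε x z t ≤ Real.pi ^ 2 / t * Real.exp (-(m ^ 2 * t)) := by
  have hpi := Real.pi_pos
  unfold Ik
  calc _ ≤ Real.pi * Real.exp (-(m ^ 2 * t)) * (1 * 1) * (√(Real.pi / t) * √(Real.pi / t)) := by
        gcongr
        · exact exp_neg_div_le_one ht _
        · exact exp_neg_div_le_one ht _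
        · exact pk_le_sqrt hε ht _
        · exact pk_le_sqrt hε ht _
    _ = _ := by rw [Real.mul_self_sqrt (by positivity)]; ring

lemma Ik_le_two (m ε : ℝ) (hε : 0 < ε) (x z : ℝ × ℝ) {t ρ : ℝ} (ht : 0 < t) (hρ : 0 ≤ ρ)
    (h : (ρ ≤ |x.1| ∨ ρ ≤ |x.2|) ∨ (ρ ≤ |z.1| ∨ ρ ≤ |z.2|) ∨ ρ ≤ ε) :
    ρ * Ik m ε x z t ≤ 200 / √t := by
  have hpi := Real.pi_pos
  have hpi2 := Real.pi_lt_d2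
  have hs : 0 < √t := Real.sqrt_pos.mpr ht
  have h3 : √t ^ 2 = t := Real.sq_sqrt ht.le
  have hsp : √(Real.pi / t) = √Real.pi / √t := Real.sqrt_div' _ ht.le
  have hsp2 : √Real.pi ^ 2 = Real.pi := Real.sq_sqrt hpi.le
  have hsp3 : √Real.pi ≤ 2 := by
    rw [Real.sqrt_le_left (by norm_num)]; linarith
  have hsp0 := Real.sqrt_nonneg Real.pi
  have hem : Real.exp (-(m ^ 2 * t)) ≤ 1 := by
    rw [Real.exp_le_one_iff]
    have : 0 ≤ m ^ 2 * t := by positivity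
    linarith
  have x1 := exp_neg_div_le_one ht x.1
  have x2 := exp_neg_div_le_one ht x.2
  have p1 := pk_le_sqrt hε ht z.1
  have p2 := pk_le_sqrt hε ht z.2
  have g1 := gauss_le ht x.1
  have g2 := gauss_le ht x.2
  have a1 := pk_le_z hε ht z.1
  have a2 := pk_le_z hε ht z.2
  have b1 := pk_le_eps hε ht z.1
  rw [hsp] at p1 p2
  unfold Ik
  set E0 := Real.exp (-(m ^ 2 * t))
  set X1 := Real.exp (-(x.1 ^ 2 / (4 * t)))
  set X2 := Real.exp (-(x.2 ^ 2 / (4 * t)))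
  set P1 := ‖∫ k, pk ε t z.1 k‖
  set P2 := ‖∫ k, pk ε t z.2 k‖
  have E00 : 0 ≤ E0 := (Real.exp_pos _).le
  have X10 : 0 ≤ X1 := (Real.exp_pos _).le
  have X20 : 0 ≤ X2 := (Real.exp_pos _).le
  have P10 : 0 ≤ P1 := norm_nonneg _
  have P20 : 0 ≤ P2 := norm_nonneg _
  have fin1 : Real.pi * 1 * (√t * 1) * (√Real.pi / √t * (√Real.pi / √t)) ≤ 200 / √t := by
    rw [show Real.pi * 1 * (√t * 1) * (√Real.pi / √t * (√Real.pi / √t)) = (Real.pi * √Real.pi ^ 2) / √t by field_simp, hsp2]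
    gcongr
    nlinarith
  have fin2 : Real.pi * 1 * (1 * 1) * (20 * (√Real.pi / √t)) ≤ 200 / √t := by
    rw [show Real.pi * 1 * (1 * 1) * (20 * (√Real.pi / √t)) = (Real.pi * 20 * √Real.pi) / √t by field_simp]
    gcongr
    nlinarith
  rcases h with (h | h) | (h | h) | h
  · have : ρ * X1 ≤ √t := le_trans (by gcongr) g1
    calc _ = Real.pi * E0 * ((ρ * X1) * X2) * (P1 * P2) := by ring
      _ ≤ Real.pi * 1 * (√t * 1) * (√Real.pi / √t * (√Real.pi / √t)) := by gcongr
      _ ≤ _ := fin1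
  · have : ρ * X2 ≤ √t := le_trans (by gcongr) g2
    calc _ = Real.pi * E0 * ((ρ * X2) * X1) * (P1 * P2) := by ring
      _ ≤ Real.pi * 1 * (√t * 1) * (√Real.pi / √t * (√Real.pi / √t)) := by gcongr
      _ ≤ _ := fin1
  · have : ρ * P1 ≤ 20 := le_trans (by gcongr) a1
    calc _ = Real.pi * E0 * (X1 * X2) * ((ρ * P1) * P2) := by ring
      _ ≤ Real.pi * 1 * (1 * 1) * (20 * (√Real.pi / √t)) := by gcongr
      _ ≤ _ := fin2
  · have : ρ * P2 ≤ 20 := le_trans (by gcongr) a2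
    calc _ = Real.pi * E0 * (X1 * X2) * ((ρ * P2) * P1) := by ring
      _ ≤ Real.pi * 1 * (1 * 1) * (20 * (√Real.pi / √t)) := by gcongr
      _ ≤ _ := fin2
  · have : ρ * P1 ≤ 20 := le_trans (by gcongr) b1
    calc _ = Real.pi * E0 * (X1 * X2) * ((ρ * P1) * P2) := by ring
      _ ≤ Real.pi * 1 * (1 * 1) * (20 * (√Real.pi / √t)) := by gcongr
      _ ≤ _ := fin2

lemma Ik_int (m ε : ℝ) (hm : 0 < m) (hε : 0 < ε) (x z : ℝ × ℝ) {ρ : ℝ} (hρ : 0 < ρ) (hρ1 : ρ ≤ 1)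
    (h : (ρ ≤ |x.1| ∨ ρ ≤ |x.2|) ∨ (ρ ≤ |z.1| ∨ ρ ≤ |z.2|) ∨ ρ ≤ ε) :
    ∫ t in Set.Ioi (0 : ℝ), Ik m ε x z t ≤
      400 + Real.pi ^ 2 * (-2 * Real.log ρ) + Real.pi ^ 2 * ∫ t in Set.Ioi (0 : ℝ), Real.exp (-(m ^ 2 * t)) := by
  have hpi := Real.pi_pos
  have hr2 : 0 < ρ ^ 2 := by positivity
  have hr21 : ρ ^ 2 ≤ 1 := pow_le_one₀ hρ.le hρ1
  have i1 : IntegrableOn (fun t : ℝ => 200 / ρ * t ^ (-(1/2) : ℝ)) (Set.Ioc 0 (ρ ^ 2)) := by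
    have := (intervalIntegral.intervalIntegrable_rpow' (a := 0) (b := ρ ^ 2) (r := -(1/2)) (by norm_num)).const_mul (200 / ρ)
    exact (intervalIntegrable_iff_integrableOn_Ioc_of_le hr2.le).mp this
  have v1 : ∫ t in Set.Ioc 0 (ρ ^ 2), 200 / ρ * t ^ (-(1/2) : ℝ) = 400 := by
    rw [← intervalIntegral.integral_of_le hr2.le, intervalIntegral.integral_const_mul, integral_rpow (by left; norm_num)]
    rw [show (-(1/2) + 1 : ℝ) = 1/2 by norm_num, ← Real.sqrt_eq_rpow, Real.sqrt_sq hρ.le, Real.zero_rpow (by norm_num)]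
    field_simp
    ring
  have h0 : (0 : ℝ) ∉ Set.uIcc (ρ ^ 2) 1 := by
    rw [Set.uIcc_of_le hr21]
    intro h; linarith [h.1]
  have i2 : IntegrableOn (fun t : ℝ => Real.pi ^ 2 * t⁻¹) (Set.Ioc (ρ ^ 2) 1) := by
    have := (intervalIntegral.intervalIntegrable_inv (f := fun t : ℝ => t) (μ := volume) (a := ρ ^ 2) (b := 1)
      (fun t ht e => h0 (e ▸ ht)) continuousOn_id).const_mul (Real.pi ^ 2)
    exact (intervalIntegrable_iff_integrableOn_Ioc_of_le hr21).mp this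
  have v2 : ∫ t in Set.Ioc (ρ ^ 2) 1, Real.pi ^ 2 * t⁻¹ = Real.pi ^ 2 * (-2 * Real.log ρ) := by
    rw [← intervalIntegral.integral_of_le hr21, intervalIntegral.integral_const_mul, integral_inv h0, one_div, Real.log_inv, Real.log_pow]
    push_cast
    ring
  have i3 := (exp_integrableOn hm).const_mul (Real.pi ^ 2)
  have j1 : IntegrableOn ((Set.Ioc 0 (ρ ^ 2)).indicator (fun t : ℝ => 200 / ρ * t ^ (-(1/2) : ℝ))) (Set.Ioi 0) :=
    (i1.integrable_indicator measurableSet_Ioc).integrableOn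
  have j2 : IntegrableOn ((Set.Ioc (ρ ^ 2) 1).indicator (fun t : ℝ => Real.pi ^ 2 * t⁻¹)) (Set.Ioi 0) :=
    (i2.integrable_indicator measurableSet_Ioc).integrableOn
  have hmain : ∫ t in Set.Ioi (0 : ℝ), Ik m ε x z t ≤ ∫ t in Set.Ioi (0 : ℝ),
      ((Set.Ioc 0 (ρ ^ 2)).indicator (fun t : ℝ => 200 / ρ * t ^ (-(1/2) : ℝ)) t
        + (Set.Ioc (ρ ^ 2) 1).indicator (fun t : ℝ => Real.pi ^ 2 * t⁻¹) t
        + Real.pi ^ 2 * Real.exp (-(m ^ 2 * t))) := by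
    apply integral_mono_of_nonneg
    · exact Filter.Eventually.of_forall fun t => Ik_nonneg m ε x z t
    · exact (j1.add j2).add i3
    · refine (ae_restrict_iff' measurableSet_Ioi).mpr (Filter.Eventually.of_forall fun t ht => ?_)
      have ht : 0 < t := ht
      have q1 := Ik_le_one m ε hε x z ht
      have q2 := Ik_le_two m ε hε x z ht hρ.le h
      have hem : Real.exp (-(m ^ 2 * t)) ≤ 1 := by
        rw [Real.exp_le_one_iff]
        have : 0 ≤ m ^ 2 * t := by positivity
        linarith
      have hem0 := Real.exp_pos (-(m ^ 2 * t))
      have k3 : 0 ≤ Real.pi ^ 2 * Real.exp (-(m ^ 2 * t)) := by positivity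
      have k1 : 0 ≤ (Set.Ioc 0 (ρ ^ 2)).indicator (fun t : ℝ => 200 / ρ * t ^ (-(1/2) : ℝ)) t :=
        Set.indicator_nonneg (fun t ht => mul_nonneg (by positivity) (Real.rpow_nonneg ht.1.le _)) t
      have k2 : 0 ≤ (Set.Ioc (ρ ^ 2) 1).indicator (fun t : ℝ => Real.pi ^ 2 * t⁻¹) t :=
        Set.indicator_nonneg (fun t ht => mul_nonneg (by positivity) (inv_nonneg.mpr (hr2.le.trans ht.1.le))) t
      rcases le_or_gt t (ρ ^ 2) with c1 | c1
      · have e : (Set.Ioc 0 (ρ ^ 2)).indicator (fun t : ℝ => 200 / ρ * t ^ (-(1/2) : ℝ)) t = 200 / √t / ρ := by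
          rw [Set.indicator_of_mem (show t ∈ Set.Ioc 0 (ρ ^ 2) from ⟨ht, c1⟩), Real.rpow_neg ht.le, ← Real.sqrt_eq_rpow]
          ring
        have : Ik m ε x z t ≤ 200 / √t / ρ := by
          rw [le_div_iff₀ hρ, mul_comm]; exact q2
        linarith
      · rcases le_or_gt t 1 with c2 | c2
        · have e : (Set.Ioc (ρ ^ 2) 1).indicator (fun t : ℝ => Real.pi ^ 2 * t⁻¹) t = Real.pi ^ 2 / t := by
            rw [Set.indicator_of_mem (show t ∈ Set.Ioc (ρ ^ 2) 1 from ⟨c1, c2⟩)]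
            ring
          have : Real.pi ^ 2 / t * Real.exp (-(m ^ 2 * t)) ≤ Real.pi ^ 2 / t :=
            mul_le_of_le_one_right (by positivity) hem
          linarith
        · have : Real.pi ^ 2 / t * Real.exp (-(m ^ 2 * t)) ≤ Real.pi ^ 2 * Real.exp (-(m ^ 2 * t)) := by
            gcongr
            exact div_le_self (by positivity) c2.le
          linarith
  refine hmain.trans (le_of_eq ?_)
  have e1 := integral_add (j1.add j2) i3
  simp only [Pi.add_apply] at e1
  have q1 : Set.Ioi (0:ℝ) ∩ Set.Ioc 0 (ρ ^ 2) = Set.Ioc 0 (ρ ^ 2) :=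
    Set.inter_eq_right.mpr (fun t ht => ht.1)
  have q2 : Set.Ioi (0:ℝ) ∩ Set.Ioc (ρ ^ 2) 1 = Set.Ioc (ρ ^ 2) 1 :=
    Set.inter_eq_right.mpr (fun t ht => hr2.trans ht.1)
  rw [e1, integral_add j1 j2, setIntegral_indicator measurableSet_Ioc,
    setIntegral_indicator measurableSet_Ioc, q1, q2, v1, v2, integral_const_mul]

/-- Corollary 3.5: for every `m > 0` and `C > 2/(4π)²` there is a `D ≥ 0`, independent of
`ε`, such that for all `ε ∈ (0,1]` and `(x,z) ∈ ℝ² × ℝ²`,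
`|Ḡ_ε(x,z)| ≤ C log₊(1/(max(√(|x|²+|z|²), ε))) + D`. -/
theorem stmt_3 (m : ℝ) (hm : 0 < m) (C : ℝ) (hC : 2 / (4 * Real.pi) ^ 2 < C) :
    ∃ D : ℝ, 0 ≤ D ∧
      ∀ ε : ℝ, ε ∈ Set.Ioc (0 : ℝ) 1 → ∀ x z : ℝ × ℝ,
        ‖GbarEps m ε x z‖ ≤
          C * max (Real.log (1 /
              max (Real.sqrt (x.1 ^ 2 + x.2 ^ 2 + z.1 ^ 2 + z.2 ^ 2)) ε)) 0 + D := by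
  have hpi := Real.pi_pos
  set M := ∫ t in Set.Ioi (0 : ℝ), Real.exp (-(m ^ 2 * t)) with hM
  have hM0 : 0 ≤ M := integral_nonneg fun t => (Real.exp_pos _).le
  have hl2 : 0 ≤ Real.log 2 := Real.log_nonneg (by norm_num)
  refine ⟨1 / (2 * Real.pi) ^ 4 * (400 + Real.pi ^ 2 * (2 * Real.log 2) + Real.pi ^ 2 * M), by positivity, ?_⟩
  rintro ε ⟨hε, hε1⟩ x z
  set N := max (Real.sqrt (x.1 ^ 2 + x.2 ^ 2 + z.1 ^ 2 + z.2 ^ 2)) ε with hN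
  set R := max (max |x.1| |x.2|) (max (max |z.1| |z.2|) ε) with hR
  have r1 : |x.1| ≤ R := by simp [hR]
  have r2 : |x.2| ≤ R := by simp [hR]
  have r3 : |z.1| ≤ R := by simp [hR]
  have r4 : |z.2| ≤ R := by simp [hR]
  have r5 : ε ≤ R := by simp [hR]
  have hR0 : 0 < R := hε.trans_le r5
  have hN0 : 0 < N := hε.trans_le (le_max_right _ _)
  have hNR : N ≤ 2 * R := by
    apply max_le _ (by linarith)
    apply Real.sqrt_le_iff.mpr ⟨by positivity, ?_⟩
    have := sq_le_sq' (by linarith [abs_nonneg x.1]) r1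
    have := sq_le_sq' (by linarith [abs_nonneg x.2]) r2
    have := sq_le_sq' (by linarith [abs_nonneg z.1]) r3
    have := sq_le_sq' (by linarith [abs_nonneg z.2]) r4
    simp only [sq_abs] at *
    nlinarith
  have hρ : 0 < min R 1 := lt_min hR0 one_pos
  have hcase : (min R 1 ≤ |x.1| ∨ min R 1 ≤ |x.2|) ∨ (min R 1 ≤ |z.1| ∨ min R 1 ≤ |z.2|) ∨ min R 1 ≤ ε := by
    have : min R 1 ≤ max (max |x.1| |x.2|) (max (max |z.1| |z.2|) ε) := min_le_left _ _
    simpa only [le_max_iff] using this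
  have hI := Ik_int m ε hm hε x z hρ (min_le_right _ _) hcase
  have hG : ‖GbarEps m ε x z‖ ≤ 1 / (2 * Real.pi) ^ 4 * ∫ t in Set.Ioi (0 : ℝ), Ik m ε x z t :=
    Gbar_norm_le hm hε x z
  have hlog : -Real.log (min R 1) ≤ max (Real.log (1 / N)) 0 + Real.log 2 := by
    rcases le_total R 1 with h | h
    · rw [min_eq_left h]
      have h1 : Real.log N ≤ Real.log 2 + Real.log R := by
        rw [← Real.log_mul (by norm_num) hR0.ne']
        exact Real.log_le_log hN0 hNR
      have h2 := le_max_left (Real.log (1 / N)) 0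
      rw [one_div, Real.log_inv] at h2 ⊢
      linarith
    · rw [min_eq_right h, Real.log_one]
      have h2 := le_max_right (Real.log (1 / N)) 0
      linarith
  set L := max (Real.log (1 / N)) 0
  have hL : 0 ≤ L := le_max_right _ _
  have hc : 2 / (4 * Real.pi) ^ 2 = 1 / (2 * Real.pi) ^ 4 * (Real.pi ^ 2 * 2) := by
    field_simp
    norm_num
  calc _ ≤ _ := hG
    _ ≤ 1 / (2 * Real.pi) ^ 4 * (400 + Real.pi ^ 2 * (2 * (L + Real.log 2)) + Real.pi ^ 2 * M) := by
      apply mul_le_mul_of_nonneg_left _ (by positivity)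
      refine hI.trans ?_
      have : Real.pi ^ 2 * (-2 * Real.log (min R 1)) ≤ Real.pi ^ 2 * (2 * (L + Real.log 2)) := by
        apply mul_le_mul_of_nonneg_left _ (by positivity)
        linarith
      linarith
    _ = 2 / (4 * Real.pi) ^ 2 * L + 1 / (2 * Real.pi) ^ 4 * (400 + Real.pi ^ 2 * (2 * Real.log 2) + Real.pi ^ 2 * M) := by
      rw [hc]; ring
    _ ≤ _ := by gcongr
end

section
/- For every p ∈ (1,∞) and every ℓ ∈ ℝ there exists a constant C > 0 such that for every ε ∈ (0,1] and every measurable f : ℝ² → ℝ with ‖f‖_{L^p_ℓ(ℝ²)} < ∞, the discretization D^ε f is well defined and ‖D^ε f‖_{L^p_ℓ(εℤ²)} ≤ C ‖f‖_{L^p_ℓ(ℝ²)}. -/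
open MeasureTheory
open scoped ENNReal

/-- The polynomial weight `ρ_ℓ(y) = (1+|y|²)^{-ℓ/2}` on `ℝ²`. -/
noncomputable def rho2 (ℓ : ℝ) (y : ℝ × ℝ) : ℝ := (1 + y.1 ^ 2 + y.2 ^ 2) ^ (-ℓ / 2)

/-- The lattice point `(εn₁, εn₂) ∈ εℤ² ⊂ ℝ²` indexed by `n ∈ ℤ²`. -/
noncomputable def pt (ε : ℝ) (n : ℤ × ℤ) : ℝ × ℝ := (ε * (n.1 : ℝ), ε * (n.2 : ℝ))

/-- The square `Q_ε(z) = (z₁-ε/2, z₁+ε/2] × (z₂-ε/2, z₂+ε/2]`. -/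
def Qeps (ε : ℝ) (z : ℝ × ℝ) : Set (ℝ × ℝ) :=
  Set.Ioc (z.1 - ε / 2) (z.1 + ε / 2) ×ˢ Set.Ioc (z.2 - ε / 2) (z.2 + ε / 2)

/-- The discretization operator `D^ε f(z) = ε⁻² ∫_{Q_ε(z)} f(x) dx`. -/
noncomputable def Deps (ε : ℝ) (f : ℝ × ℝ → ℝ) (n : ℤ × ℤ) : ℝ :=
  (ε ^ 2)⁻¹ * ∫ x in Qeps ε (pt ε n), f x

/-- The index of the cell `Q_ε(z)` containing `t` in one coordinate:
`t ∈ (εn - ε/2, εn + ε/2]` iff `n = ⌈t/ε - 1/2⌉`. -/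
noncomputable def cellIdx (ε t : ℝ) : ℤ := ⌈t / ε - 1 / 2⌉

/-- The extension operator `E^ε`, producing the piecewise constant function with
`E^ε f = f(z)` on `Q_ε(z)`. -/
noncomputable def Eeps (ε : ℝ) (f : ℤ × ℤ → ℝ) (x : ℝ × ℝ) : ℝ :=
  f (cellIdx ε x.1, cellIdx ε x.2)

/-- The weighted norm `‖g‖_{L^p_ℓ(ℝ²)} = (∫_{ℝ²} |ρ_ℓ(x) g(x)|^p dx)^{1/p}`,
valued in `ℝ≥0∞`. -/
noncomputable def lpNormR2 (p ℓ : ℝ) (g : ℝ × ℝ → ℝ) : ℝ≥0∞ :=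
  (∫⁻ x : ℝ × ℝ, ENNReal.ofReal (|rho2 ℓ x * g x| ^ p)) ^ (1 / p)

/-- The weighted lattice norm `‖f‖_{L^p_ℓ(εℤ²)} = (ε² Σ_{z∈εℤ²} |ρ_ℓ(z) f(z)|^p)^{1/p}`,
valued in `ℝ≥0∞`. -/
noncomputable def lpNormLat (p ℓ ε : ℝ) (f : ℤ × ℤ → ℝ) : ℝ≥0∞ :=
  (ENNReal.ofReal (ε ^ 2) *
    ∑' n : ℤ × ℤ, ENNReal.ofReal (|rho2 ℓ (pt ε n) * f n| ^ p)) ^ (1 / p)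

/-- The Euclidean length of a point of `ℝ²`. -/
noncomputable def en2 (y : ℝ × ℝ) : ℝ := Real.sqrt (y.1 ^ 2 + y.2 ^ 2)

/-- The weighted lattice `L^p_ℓ` norm of the difference `f(·+k) − f`. -/
noncomputable def latDiffNorm (p ℓ ε : ℝ) (f : ℤ × ℤ → ℝ) (k : ℤ × ℤ) : ℝ≥0∞ :=
  (ENNReal.ofReal (ε ^ 2) *
    ∑' n : ℤ × ℤ, ENNReal.ofReal (rho2 ℓ (pt ε n) ^ p * |f (n + k) - f n| ^ p)) ^ (1 / p)

/-- The lattice fractional Sobolev norm `‖f‖_{W^{s,p}_ℓ(εℤ²)} = ‖f‖_{L^p_ℓ(εℤ²)} +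
sup{ |k|^{-s} ‖f(·+k) − f‖_{L^p_ℓ(εℤ²)} : k ∈ εℤ², 0 < |k| ≤ 1 }`. -/
noncomputable def latWNorm (s p ℓ ε : ℝ) (f : ℤ × ℤ → ℝ) : ℝ≥0∞ :=
  lpNormLat p ℓ ε f +
    ⨆ (k : ℤ × ℤ) (_ : 0 < en2 (pt ε k) ∧ en2 (pt ε k) ≤ 1),
      ENNReal.ofReal (en2 (pt ε k) ^ (-s)) * latDiffNorm p ℓ ε f k

/-- The difference-quotient norm of the weighted Besov space `B^s_{p,∞,ℓ}(ℝ²)`: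
`‖g‖_{L^p_ℓ} + sup{ |h|^{-s} ‖g(·+h) − g‖_{L^p_ℓ} : h ∈ ℝ², 0 < |h| ≤ 1 }`. -/
noncomputable def besovDiffNormR2 (s p ℓ : ℝ) (g : ℝ × ℝ → ℝ) : ℝ≥0∞ :=
  lpNormR2 p ℓ g +
    ⨆ (h : ℝ × ℝ) (_ : 0 < en2 h ∧ en2 h ≤ 1),
      ENNReal.ofReal (en2 h ^ (-s)) * lpNormR2 p ℓ (fun x => g (x + h) - g x)

theorem aux_cmp (ε : ℝ) (hε : ε ∈ Set.Ioc (0:ℝ) 1) (z x : ℝ × ℝ) (hx : x ∈ Qeps ε z) :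
    1 + z.1 ^ 2 + z.2 ^ 2 ≤ 2 * (1 + x.1 ^ 2 + x.2 ^ 2) ∧
    1 + x.1 ^ 2 + x.2 ^ 2 ≤ 2 * (1 + z.1 ^ 2 + z.2 ^ 2) := by
  obtain ⟨h0, h1⟩ := hε
  obtain ⟨⟨a1, a2⟩, ⟨b1, b2⟩⟩ := hx
  have ha : (x.1 - z.1) ^ 2 ≤ 1 / 4 := by nlinarith
  have hb : (x.2 - z.2) ^ 2 ≤ 1 / 4 := by nlinarith
  constructor
  · nlinarith [sq_nonneg (2 * x.1 - z.1), sq_nonneg (2 * x.2 - z.2)]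
  · nlinarith [sq_nonneg (2 * z.1 - x.1), sq_nonneg (2 * z.2 - x.2)]

theorem aux_base_pos (y : ℝ × ℝ) : 0 < 1 + y.1 ^ 2 + y.2 ^ 2 := by positivity

theorem aux_rho_pos (ℓ : ℝ) (y : ℝ × ℝ) : 0 < rho2 ℓ y :=
  Real.rpow_pos_of_pos (aux_base_pos y) _

theorem aux_rho (ℓ ε : ℝ) (hε : ε ∈ Set.Ioc (0:ℝ) 1) (z x : ℝ × ℝ) (hx : x ∈ Qeps ε z) :
    rho2 ℓ z ≤ (2:ℝ) ^ (|-ℓ / 2|) * rho2 ℓ x := by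
  obtain ⟨h1, h2⟩ := aux_cmp ε hε z x hx
  have pz := aux_base_pos z
  have px := aux_base_pos x
  unfold rho2
  rcases le_total 0 (-ℓ / 2) with h | h
  · rw [abs_of_nonneg h, ← Real.mul_rpow (by norm_num) px.le]
    exact Real.rpow_le_rpow pz.le h1 h
  · rw [abs_of_nonpos h]
    have := Real.rpow_le_rpow_of_nonpos px h2 h
    rw [Real.mul_rpow (by norm_num) pz.le] at this
    calc _ = (2:ℝ) ^ (-(-ℓ / 2)) * (2 ^ (-ℓ / 2) * (1 + z.1 ^ 2 + z.2 ^ 2) ^ (-ℓ / 2)) := by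
          rw [← mul_assoc, ← Real.rpow_add (by norm_num)]; simp
      _ ≤ _ := by gcongr

theorem aux_meas (ε : ℝ) (z : ℝ × ℝ) : MeasurableSet (Qeps ε z) :=
  measurableSet_Ioc.prod measurableSet_Ioc

theorem aux_vol (ε : ℝ) (hε : 0 < ε) (z : ℝ × ℝ) :
    volume (Qeps ε z) = ENNReal.ofReal (ε ^ 2) := by
  unfold Qeps
  rw [Measure.volume_eq_prod, Measure.prod_prod, Real.volume_Ioc, Real.volume_Ioc,
    ← ENNReal.ofReal_mul (by linarith)]
  congr 1; ring

theorem aux_disj (ε : ℝ) (hε : 0 < ε) :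
    Pairwise (Function.onFun Disjoint fun n : ℤ × ℤ => Qeps ε (pt ε n)) := by
  have key : ∀ (a b : ℤ) (t : ℝ), t ∈ Set.Ioc (ε * (a:ℝ) - ε / 2) (ε * (a:ℝ) + ε / 2) →
      t ∈ Set.Ioc (ε * (b:ℝ) - ε / 2) (ε * (b:ℝ) + ε / 2) → a ≤ b := by
    intro a b t ha hb
    have h : ε * (a:ℝ) < ε * ((b:ℝ) + 1) := by linarith [ha.1, hb.2]
    have h' : (a:ℝ) < b + 1 := lt_of_mul_lt_mul_left h hε.le
    have : a < b + 1 := by exact_mod_cast h'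
    omega
  intro m n hmn
  refine Set.disjoint_left.mpr fun x hm hn => hmn ?_
  exact Prod.ext (le_antisymm (key _ _ _ hm.1 hn.1) (key _ _ _ hn.1 hm.1))
    (le_antisymm (key _ _ _ hm.2 hn.2) (key _ _ _ hn.2 hm.2))

theorem aux_holder (p : ℝ) (hp : 1 < p) (Q : Set (ℝ × ℝ)) (g : ℝ × ℝ → ℝ≥0∞)
    (hg : Measurable g) :
    (∫⁻ x in Q, g x) ^ p ≤ (∫⁻ x in Q, g x ^ p) * (volume Q) ^ (p - 1) := by
  have hpq := Real.HolderConjugate.conjExponent hp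
  have h := ENNReal.lintegral_mul_le_Lp_mul_Lq (volume.restrict Q) hpq
    (f := g) (g := fun _ => 1) hg.aemeasurable aemeasurable_const
  simp only [Pi.mul_apply, mul_one, ENNReal.one_rpow, lintegral_const, one_mul,
    Measure.restrict_apply_univ] at h
  have h0 : 0 < p := by linarith
  calc _ ≤ _ := ENNReal.rpow_le_rpow h h0.le
    _ = _ := by
      rw [ENNReal.mul_rpow_of_nonneg _ _ h0.le, ← ENNReal.rpow_mul, ← ENNReal.rpow_mul,
        one_div_mul_cancel h0.ne', ENNReal.rpow_one]
      congr 2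
      have : p - 1 ≠ 0 := by linarith
      simp only [Real.conjExponent]
      field_simp

/-- Lemma 2.22 (first part): for every `p ∈ (1,∞)` and `ℓ ∈ ℝ` there is `C > 0` such
that for every `ε ∈ (0,1]` and every measurable `f : ℝ² → ℝ` with finite `L^p_ℓ(ℝ²)`
norm, the discretization `D^ε f` is well defined and
`‖D^ε f‖_{L^p_ℓ(εℤ²)} ≤ C ‖f‖_{L^p_ℓ(ℝ²)}`. -/
theorem stmt_6 (p ℓ : ℝ) (hp : 1 < p) :
    ∃ C : ℝ, 0 < C ∧
      ∀ ε : ℝ, ε ∈ Set.Ioc (0 : ℝ) 1 → ∀ f : ℝ × ℝ → ℝ, Measurable f →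
        lpNormR2 p ℓ f < ⊤ →
        (∀ n : ℤ × ℤ, IntegrableOn f (Qeps ε (pt ε n))) ∧
          lpNormLat p ℓ ε (Deps ε f) ≤ ENNReal.ofReal C * lpNormR2 p ℓ f := by
  set C : ℝ := (2:ℝ) ^ (|-ℓ / 2|) with hC
  have hCpos : 0 < C := Real.rpow_pos_of_pos (by norm_num) _
  have h0 : 0 < p := by linarith
  refine ⟨C, hCpos, ?_⟩
  intro ε hε f hf hfin
  have hε0 := hε.1
  set g : ℝ × ℝ → ℝ≥0∞ := fun x => ENNReal.ofReal |rho2 ℓ x * f x| with hgdef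
  have hrho : Measurable (rho2 ℓ) := by unfold rho2; fun_prop
  have hg : Measurable g := by
    have : Measurable fun x => |rho2 ℓ x * f x| := (hrho.mul hf).abs
    exact this.ennreal_ofReal
  have hgp : ∀ x, ENNReal.ofReal (|rho2 ℓ x * f x| ^ p) = g x ^ p := fun x =>
    (ENNReal.ofReal_rpow_of_nonneg (abs_nonneg _) h0.le).symm
  have hR : lpNormR2 p ℓ f = (∫⁻ x, g x ^ p) ^ (1 / p) := by
    unfold lpNormR2; simp only [hgp]
  have hI : ∫⁻ x, g x ^ p < ⊤ := by
    rw [hR] at hfin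
    by_contra hcon
    rw [not_lt_top_iff.mp hcon, ENNReal.top_rpow_of_pos (by positivity)] at hfin
    exact lt_irrefl _ hfin
  -- the weighted bound on a cell
  have hcell : ∀ n : ℤ × ℤ, ENNReal.ofReal (rho2 ℓ (pt ε n)) * ∫⁻ x in Qeps ε (pt ε n), ‖f x‖ₑ
      ≤ ENNReal.ofReal C * ∫⁻ x in Qeps ε (pt ε n), g x := by
    intro n
    rw [← lintegral_const_mul _ hf.enorm, ← lintegral_const_mul _ hg]
    refine setLIntegral_mono' (aux_meas _ _) fun x hx => ?_
    rw [Real.enorm_eq_ofReal_abs, ← ENNReal.ofReal_mul (aux_rho_pos _ _).le, hgdef]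
    simp only
    rw [← ENNReal.ofReal_mul hCpos.le, abs_mul, abs_of_pos (aux_rho_pos ℓ x), ← mul_assoc]
    exact ENNReal.ofReal_le_ofReal
      (mul_le_mul_of_nonneg_right (aux_rho ℓ ε hε _ x hx) (abs_nonneg _))
  have hH := fun n : ℤ × ℤ => aux_holder p hp (Qeps ε (pt ε n)) g hg
  have hv : ∀ n : ℤ × ℤ, volume (Qeps ε (pt ε n)) = ENNReal.ofReal (ε ^ 2) :=
    fun n => aux_vol ε hε0 _
  simp only [hv] at hH
  set v : ℝ≥0∞ := ENNReal.ofReal (ε ^ 2) with hvdef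
  have hv0 : v ≠ 0 := by simp [hvdef, hε0.ne']
  have hvt : v ≠ ⊤ := ENNReal.ofReal_ne_top
  refine ⟨fun n => ?_, ?_⟩
  · refine ⟨hf.aestronglyMeasurable, ?_⟩
    rw [hasFiniteIntegral_iff_enorm]
    have h1 : (∫⁻ x in Qeps ε (pt ε n), g x) ^ p < ⊤ := by
      refine (hH n).trans_lt (ENNReal.mul_lt_top ?_ ?_)
      · exact (setLIntegral_le_lintegral _ _).trans_lt hI
      · exact ENNReal.rpow_lt_top_of_nonneg (by linarith) hvt
    have h2 : (∫⁻ x in Qeps ε (pt ε n), g x) < ⊤ := by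
      by_contra hcon
      rw [not_lt_top_iff.mp hcon, ENNReal.top_rpow_of_pos h0] at h1
      exact lt_irrefl _ h1
    have h3 := (hcell n).trans_lt (ENNReal.mul_lt_top ENNReal.ofReal_lt_top h2)
    by_contra hcon
    rw [not_lt_top_iff.mp hcon, ENNReal.mul_top] at h3
    · exact lt_irrefl _ h3
    · simpa using aux_rho_pos ℓ (pt ε n)
  · have hterm : ∀ n : ℤ × ℤ,
        v * ENNReal.ofReal (|rho2 ℓ (pt ε n) * Deps ε f n| ^ p)
          ≤ ENNReal.ofReal C ^ p * ∫⁻ x in Qeps ε (pt ε n), g x ^ p := by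
      intro n
      have e1 : ENNReal.ofReal |rho2 ℓ (pt ε n) * Deps ε f n|
          ≤ v⁻¹ * (ENNReal.ofReal C * ∫⁻ x in Qeps ε (pt ε n), g x) := by
        refine le_trans ?_ (mul_le_mul_right (hcell n) v⁻¹)
        rw [abs_mul, abs_of_pos (aux_rho_pos _ _), ENNReal.ofReal_mul (aux_rho_pos _ _).le,
          Deps, abs_mul, abs_of_pos (by positivity : (0:ℝ) < (ε ^ 2)⁻¹),
          ENNReal.ofReal_mul (by positivity), ENNReal.ofReal_inv_of_pos (by positivity),
          ← hvdef, mul_left_comm]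
        gcongr
        rw [← Real.enorm_eq_ofReal_abs]
        exact enorm_integral_le_lintegral_enorm _
      rw [← ENNReal.ofReal_rpow_of_nonneg (abs_nonneg _) h0.le]
      calc _ ≤ v * (v⁻¹ * (ENNReal.ofReal C * ∫⁻ x in Qeps ε (pt ε n), g x)) ^ p := by
            gcongr
        _ = v * v⁻¹ ^ p * ENNReal.ofReal C ^ p * (∫⁻ x in Qeps ε (pt ε n), g x) ^ p := by
            rw [ENNReal.mul_rpow_of_nonneg _ _ h0.le, ENNReal.mul_rpow_of_nonneg _ _ h0.le]
            ring
        _ ≤ v * v⁻¹ ^ p * ENNReal.ofReal C ^ p *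
            ((∫⁻ x in Qeps ε (pt ε n), g x ^ p) * v ^ (p - 1)) := by
            gcongr
            exact hH n
        _ = (v * v ^ (p - 1) * v⁻¹ ^ p) *
            (ENNReal.ofReal C ^ p * ∫⁻ x in Qeps ε (pt ε n), g x ^ p) := by ring
        _ = _ := by
            have : v * v ^ (p - 1) = v ^ p := by
              conv_lhs => rw [← ENNReal.rpow_one v, ← ENNReal.rpow_mul, one_mul]
              rw [← ENNReal.rpow_add _ _ hv0 hvt]; congr 1; ring
            rw [this, ← ENNReal.mul_rpow_of_nonneg _ _ h0.le, ENNReal.mul_inv_cancel hv0 hvt,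
              ENNReal.one_rpow, one_mul]
    have hsum : v * ∑' n : ℤ × ℤ, ENNReal.ofReal (|rho2 ℓ (pt ε n) * Deps ε f n| ^ p)
        ≤ ENNReal.ofReal C ^ p * ∫⁻ x, g x ^ p := by
      rw [← ENNReal.tsum_mul_left]
      refine (ENNReal.tsum_le_tsum hterm).trans ?_
      rw [ENNReal.tsum_mul_left,
        ← lintegral_iUnion (fun n => aux_meas ε (pt ε n)) (aux_disj ε hε0)]
      gcongr
      exact Measure.restrict_le_self
    rw [hR]
    unfold lpNormLat
    refine (ENNReal.rpow_le_rpow hsum (by positivity)).trans ?_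
    rw [ENNReal.mul_rpow_of_nonneg _ _ (by positivity), ← ENNReal.rpow_mul,
      mul_one_div_cancel h0.ne', ENNReal.rpow_one]
end

section
/- For every p ∈ [1,∞), every s with 0 < s ≤ 1/p, and every ℓ ∈ ℝ there exists a constant C > 0 such that for all ε ∈ (0,1] and all f : εℤ² → ℝ with ‖f‖_{W^{s,p}_ℓ(εℤ²)} < ∞, ‖E^ε f‖_{L^p_ℓ(ℝ²)} + sup{ |h|^{−s} ‖E^ε f(·+h) − E^ε f‖_{L^p_ℓ(ℝ²)} : h ∈ ℝ², 0 < |h| ≤ 1 } ≤ C ‖f‖_{W^{s,p}_ℓ(εℤ²)}. In other words, the extension operator E^ε is bounded from W^{s,p}_ℓ(εℤ²) into the weighted Besov space B^s_{p,∞,ℓ}(ℝ²), with operator norm bounded uniformly in ε ∈ (0,1]. -/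
open MeasureTheory
open scoped ENNReal

namespace Aux9

/-- Weight comparison constant. -/
noncomputable def Aw (ℓ : ℝ) : ℝ := (66 : ℝ) ^ (|ℓ| / 2)

lemma one_le_Aw (ℓ : ℝ) : 1 ≤ Aw ℓ :=
  Real.one_le_rpow (by norm_num) (by positivity)

lemma rho_pos (ℓ : ℝ) (y : ℝ × ℝ) : 0 < rho2 ℓ y := by
  unfold rho2; positivity

lemma base_le (x y : ℝ × ℝ) (h1 : |x.1 - y.1| ≤ 4) (h2 : |x.2 - y.2| ≤ 4) :
    1 + x.1 ^ 2 + x.2 ^ 2 ≤ 66 * (1 + y.1 ^ 2 + y.2 ^ 2) := by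
  have a1 : (x.1 - y.1) ^ 2 ≤ 16 := by
    have := sq_le_sq' (abs_le.1 h1).1 (abs_le.1 h1).2; linarith
  have a2 : (x.2 - y.2) ^ 2 ≤ 16 := by
    have := sq_le_sq' (abs_le.1 h2).1 (abs_le.1 h2).2; linarith
  nlinarith [sq_nonneg (x.1 - 2 * y.1), sq_nonneg (x.2 - 2 * y.2), sq_nonneg y.1, sq_nonneg y.2]

lemma rho_le (ℓ : ℝ) (x y : ℝ × ℝ) (h1 : |x.1 - y.1| ≤ 4) (h2 : |x.2 - y.2| ≤ 4) :
    rho2 ℓ x ≤ Aw ℓ * rho2 ℓ y := by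
  have hxy := base_le x y h1 h2
  have hyx := base_le y x (by rwa [abs_sub_comm]) (by rwa [abs_sub_comm])
  unfold rho2 Aw
  have px : 0 < 1 + x.1 ^ 2 + x.2 ^ 2 := by positivity
  have py : 0 < 1 + y.1 ^ 2 + y.2 ^ 2 := by positivity
  generalize 1 + x.1 ^ 2 + x.2 ^ 2 = X at *
  generalize 1 + y.1 ^ 2 + y.2 ^ 2 = Y at *
  rcases le_total 0 ℓ with h | h
  · rw [abs_of_nonneg h, neg_div, Real.rpow_neg px.le, Real.rpow_neg py.le, ← div_eq_mul_inv,
      inv_eq_one_div, div_le_div_iff₀ (by positivity) (by positivity), one_mul,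
      ← Real.mul_rpow (by norm_num) px.le]
    exact Real.rpow_le_rpow py.le hyx (by positivity)
  · rw [abs_of_nonpos h, ← Real.mul_rpow (by norm_num) py.le]
    exact Real.rpow_le_rpow px.le hxy (by linarith)

lemma lint_cover (S : ℤ × ℤ → Set (ℝ × ℝ)) (hS : ∀ n, MeasurableSet (S n))
    (G : ℝ × ℝ → ℝ≥0∞) (c : ℤ × ℤ → ℝ≥0∞) (M : ℝ≥0∞)
    (hG : ∀ n, ∀ x ∈ S n, G x ≤ c n) (hM : ∀ n, volume (S n) ≤ M) :
    ∫⁻ x in ⋃ n, S n, G x ≤ M * ∑' n, c n := by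
  refine (lintegral_iUnion_le _ _).trans ?_
  rw [← ENNReal.tsum_mul_left]
  refine ENNReal.tsum_le_tsum fun n => ?_
  calc ∫⁻ x in S n, G x ≤ ∫⁻ x in S n, c n := setLIntegral_mono' (hS n) (hG n)
    _ = c n * volume (S n) := by rw [setLIntegral_const]
    _ ≤ M * c n := by rw [mul_comm]; gcongr; exact hM n

/-- Points of cell `n` whose translate by `h` lies in cell `n + k` (one coordinate). -/
def S1 (ε h : ℝ) (n k : ℤ) : Set ℝ := {t | cellIdx ε t = n ∧ cellIdx ε (t + h) = n + k}

lemma cell_iff {ε : ℝ} (hε : 0 < ε) (t : ℝ) (n : ℤ) :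
    cellIdx ε t = n ↔ t ∈ Set.Ioc (ε * n - ε / 2) (ε * n + ε / 2) := by
  unfold cellIdx
  rw [Int.ceil_eq_iff, Set.mem_Ioc, sub_le_iff_le_add, div_le_iff₀ hε, lt_sub_iff_add_lt,
    lt_div_iff₀ hε]
  constructor <;> rintro ⟨a, b⟩ <;> constructor <;> nlinarith

lemma S1_meas {ε : ℝ} (hε : 0 < ε) (h : ℝ) (n k : ℤ) : MeasurableSet (S1 ε h n k) := by
  have : S1 ε h n k = Set.Ioc (ε * n - ε / 2) (ε * n + ε / 2) ∩
      (fun t => t + h) ⁻¹' Set.Ioc (ε * (n + k : ℤ) - ε / 2) (ε * (n + k : ℤ) + ε / 2) := by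
    ext t; simp only [S1, Set.mem_ofPred_eq, cell_iff hε]; rfl
  rw [this]
  exact measurableSet_Ioc.inter ((measurable_add_const h) measurableSet_Ioc)

lemma S1_vol {ε : ℝ} (hε : 0 < ε) (h : ℝ) (n k : ℤ) :
    volume (S1 ε h n k) ≤ ENNReal.ofReal ε := by
  calc volume (S1 ε h n k) ≤ volume (Set.Ioc (ε * n - ε / 2) (ε * n + ε / 2)) :=
        measure_mono fun t ht => (cell_iff hε t n).1 ht.1
    _ = ENNReal.ofReal ε := by rw [Real.volume_Ioc]; congr 1; ring

lemma S1_vol' {ε : ℝ} (hε : 0 < ε) (h : ℝ) (n k : ℤ) (hk : k ≠ 0) :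
    volume (S1 ε h n k) ≤ ENNReal.ofReal |h| := by
  rcases lt_or_gt_of_ne hk with hk | hk
  · have hk' : (k : ℝ) ≤ -1 := by exact_mod_cast (by omega : k ≤ -1)
    calc volume (S1 ε h n k) ≤ volume (Set.Ioc (ε * n - ε / 2) (ε * n - ε / 2 - h)) := by
          refine measure_mono fun t ht => ?_
          have a := (cell_iff hε t n).1 ht.1
          have b := (cell_iff hε _ _).1 ht.2
          push_cast at b
          exact ⟨a.1, by nlinarith [b.2]⟩
      _ ≤ _ := by
        rw [Real.volume_Ioc]; apply ENNReal.ofReal_le_ofReal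
        have := neg_le_abs h; linarith
  · have hk' : (1 : ℝ) ≤ k := by exact_mod_cast (by omega : 1 ≤ k)
    calc volume (S1 ε h n k) ≤ volume (Set.Ioc (ε * n + ε / 2 - h) (ε * n + ε / 2)) := by
          refine measure_mono fun t ht => ?_
          have a := (cell_iff hε t n).1 ht.1
          have b := (cell_iff hε _ _).1 ht.2
          push_cast at b
          exact ⟨by nlinarith [b.1], a.2⟩
      _ ≤ _ := by
        rw [Real.volume_Ioc]; apply ENNReal.ofReal_le_ofReal
        have := le_abs_self h; linarith

/-- The two possible shifts. -/
noncomputable def sh (ε h : ℝ) (b : Bool) : ℤ := if b then ⌊h / ε⌋ else ⌈h / ε⌉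

lemma sh_cover {ε : ℝ} (h t : ℝ) :
    ∃ b, cellIdx ε (t + h) = cellIdx ε t + sh ε h b := by
  unfold cellIdx sh
  set a := t / ε - 1 / 2 with ha
  have e : (t + h) / ε - 1 / 2 = a + h / ε := by rw [ha]; ring
  rw [e]
  set c := h / ε
  have h1 : ⌈a + c⌉ ≤ ⌈a⌉ + ⌈c⌉ := Int.ceil_add_le a c
  have h2 : ⌈a⌉ + ⌊c⌋ ≤ ⌈a + c⌉ := by
    rw [← Int.ceil_add_intCast]
    exact Int.ceil_mono (by linarith [Int.floor_le c])
  have h3 : ⌈c⌉ ≤ ⌊c⌋ + 1 := Int.ceil_le_floor_add_one c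
  by_cases hh : ⌈a + c⌉ = ⌈a⌉ + ⌊c⌋
  · exact ⟨true, by simpa using hh⟩
  · exact ⟨false, by simp; omega⟩

lemma sh_abs {ε : ℝ} (hε : 0 < ε) (h : ℝ) (b : Bool) : |ε * (sh ε h b : ℝ)| ≤ |h| + ε := by
  have e : h = ε * (h / ε) := by field_simp
  have key : |ε * (sh ε h b : ℝ) - h| ≤ ε := by
    have : ε * (sh ε h b : ℝ) - h = ε * ((sh ε h b : ℝ) - h / ε) := by
      rw [mul_sub, ← e]
    rw [this, abs_mul, abs_of_pos hε]
    have : |(sh ε h b : ℝ) - h / ε| ≤ 1 := by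
      unfold sh
      rw [abs_le]
      cases b
      · simp only [Bool.false_eq_true, if_false]
        constructor <;> linarith [Int.ceil_lt_add_one (h / ε), Int.le_ceil (h / ε)]
      · simp only [if_true]
        constructor <;> linarith [Int.lt_floor_add_one (h / ε), Int.floor_le (h / ε)]
    nlinarith
  have := abs_add_le (ε * (sh ε h b : ℝ) - h) h
  simp only [sub_add_cancel] at this
  linarith

lemma abs1_le_en2 (y : ℝ × ℝ) : |y.1| ≤ en2 y :=
  Real.abs_le_sqrt (by nlinarith [sq_nonneg y.2])

lemma abs2_le_en2 (y : ℝ × ℝ) : |y.2| ≤ en2 y :=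
  Real.abs_le_sqrt (by nlinarith [sq_nonneg y.1])

lemma en2_le (y : ℝ × ℝ) (m : ℝ) (h1 : |y.1| ≤ 2 * m) (h2 : |y.2| ≤ 2 * m) :
    en2 y ≤ 3 * m := by
  have hm : 0 ≤ m := by linarith [abs_nonneg y.1]
  unfold en2
  apply Real.sqrt_le_iff.2 ⟨by positivity, ?_⟩
  have := sq_le_sq' (abs_le.1 h1).1 (abs_le.1 h1).2
  have := sq_le_sq' (abs_le.1 h2).1 (abs_le.1 h2).2
  nlinarith

lemma term_le {p ℓ : ℝ} (hp : 1 ≤ p) (x y : ℝ × ℝ) (d : ℝ)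
    (h1 : |x.1 - y.1| ≤ 4) (h2 : |x.2 - y.2| ≤ 4) :
    ENNReal.ofReal (|rho2 ℓ x * d| ^ p) ≤
      ENNReal.ofReal (Aw ℓ ^ p) * ENNReal.ofReal (|rho2 ℓ y * d| ^ p) := by
  have hA := one_le_Aw ℓ
  rw [← ENNReal.ofReal_mul (by positivity), ← Real.mul_rpow (by positivity) (by positivity)]
  apply ENNReal.ofReal_le_ofReal
  apply Real.rpow_le_rpow (by positivity) _ (by linarith)
  rw [abs_mul, abs_mul, abs_of_pos (rho_pos _ _), abs_of_pos (rho_pos _ _), ← mul_assoc]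
  exact mul_le_mul_of_nonneg_right (rho_le ℓ x y h1 h2) (abs_nonneg d)

lemma diff_term_eq {p ℓ : ℝ} (y : ℝ × ℝ) (d : ℝ) :
    rho2 ℓ y ^ p * |d| ^ p = |rho2 ℓ y * d| ^ p := by
  rw [abs_mul, abs_of_pos (rho_pos _ _), Real.mul_rpow (rho_pos _ _).le (abs_nonneg d)]

lemma ofReal_rpow_root {p a : ℝ} (hp : 1 ≤ p) (ha : 0 ≤ a) :
    ENNReal.ofReal (a ^ p) ^ (1 / p) = ENNReal.ofReal a := by
  rw [ENNReal.ofReal_rpow_of_nonneg (by positivity) (by positivity), one_div,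
    Real.rpow_rpow_inv ha (by linarith)]

/-- Crude bound of lattice differences by the weighted norm. -/
lemma diff_le_lp {p ℓ ε : ℝ} (hp : 1 ≤ p) (f : ℤ × ℤ → ℝ) (k : ℤ × ℤ)
    (hk : en2 (pt ε k) ≤ 3) :
    latDiffNorm p ℓ ε f k ≤ ENNReal.ofReal (4 * Aw ℓ) * lpNormLat p ℓ ε f := by
  have hA := one_le_Aw ℓ
  unfold latDiffNorm lpNormLat
  rw [← ofReal_rpow_root hp (by positivity : (0 : ℝ) ≤ 4 * Aw ℓ),
    ← ENNReal.mul_rpow_of_nonneg _ _ (by positivity : 0 ≤ 1 / p)]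
  apply ENNReal.rpow_le_rpow _ (by positivity)
  rw [mul_left_comm]
  gcongr
  set u : ℤ × ℤ → ℝ≥0∞ := fun n => ENNReal.ofReal (|rho2 ℓ (pt ε n) * f n| ^ p) with hu
  have c1 := (abs1_le_en2 (pt ε k)).trans hk
  have c2 := (abs2_le_en2 (pt ε k)).trans hk
  have key : ∀ n, ENNReal.ofReal (rho2 ℓ (pt ε n) ^ p * |f (n + k) - f n| ^ p) ≤
      ENNReal.ofReal ((2 * Aw ℓ) ^ p) * (u (n + k) + u n) := by
    intro n
    rw [hu]
    simp only
    rw [← ENNReal.ofReal_add (by positivity) (by positivity), ← ENNReal.ofReal_mul (by positivity)]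
    apply ENNReal.ofReal_le_ofReal
    rw [diff_term_eq]
    set a := |rho2 ℓ (pt ε (n + k)) * f (n + k)| with ha
    set b := |rho2 ℓ (pt ε n) * f n| with hb
    have a0 : 0 ≤ a := abs_nonneg _
    have b0 : 0 ≤ b := abs_nonneg _
    have hr := rho_le ℓ (pt ε n) (pt ε (n + k))
      (by simp only [pt, Prod.fst_add, Int.cast_add] at c1 ⊢
          rw [abs_sub_comm]
          calc _ = |ε * (k.1 : ℝ)| := by congr 1; ring
            _ ≤ _ := by linarith)
      (by simp only [pt, Prod.snd_add, Int.cast_add] at c2 ⊢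
          rw [abs_sub_comm]
          calc _ = |ε * (k.2 : ℝ)| := by congr 1; ring
            _ ≤ _ := by linarith)
    have h1 : |rho2 ℓ (pt ε n) * (f (n + k) - f n)| ≤ Aw ℓ * a + b := by
      rw [mul_sub]
      refine (abs_sub _ _).trans ?_
      gcongr
      rw [ha, abs_mul, abs_mul, abs_of_pos (rho_pos _ _), abs_of_pos (rho_pos _ _), ← mul_assoc]
      exact mul_le_mul_of_nonneg_right hr (abs_nonneg _)
    have h2 : |rho2 ℓ (pt ε n) * (f (n + k) - f n)| ≤ 2 * Aw ℓ * max a b := by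
      nlinarith [le_max_left a b, le_max_right a b]
    have h3 : (max a b) ^ p ≤ a ^ p + b ^ p := by
      have := Real.rpow_nonneg a0 p
      have := Real.rpow_nonneg b0 p
      rcases max_choice a b with h | h <;> rw [h] <;> linarith
    calc _ ≤ (2 * Aw ℓ * max a b) ^ p :=
          Real.rpow_le_rpow (abs_nonneg _) h2 (by linarith)
      _ = (2 * Aw ℓ) ^ p * (max a b) ^ p :=
          Real.mul_rpow (by positivity) (le_max_of_le_left a0)
      _ ≤ _ := by gcongr
  refine (ENNReal.tsum_le_tsum key).trans ?_
  rw [ENNReal.tsum_mul_left, ENNReal.tsum_add]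
  have e : ∑' n, u (n + k) = ∑' n, u n := (Equiv.addRight k).tsum_eq u
  rw [e, ← two_mul, ← mul_assoc]
  gcongr
  rw [← ENNReal.ofReal_ofNat, ← ENNReal.ofReal_mul (by positivity)]
  apply ENNReal.ofReal_le_ofReal
  have : (4 * Aw ℓ) ^ p = (2 * Aw ℓ) ^ p * 2 ^ p := by
    rw [← Real.mul_rpow (by positivity) (by norm_num)]; ring_nf
  rw [this]
  gcongr
  simpa using Real.rpow_le_rpow_of_exponent_le (by norm_num : (1 : ℝ) ≤ 2) hp

lemma en2_nonneg (y : ℝ × ℝ) : 0 ≤ en2 y := Real.sqrt_nonneg _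

lemma pt_zero_of_en2 {ε : ℝ} (hε : 0 < ε) (k : ℤ × ℤ) (h : en2 (pt ε k) ≤ 0) : k = 0 := by
  have h1 := abs_nonpos_iff.1 ((abs1_le_en2 (pt ε k)).trans h)
  have h2 := abs_nonpos_iff.1 ((abs2_le_en2 (pt ε k)).trans h)
  simp only [pt, mul_eq_zero, hε.ne', false_or, Int.cast_eq_zero] at h1 h2
  exact Prod.ext h1 h2

lemma diff_le {p s ℓ ε : ℝ} (hp : 1 ≤ p) (hs : 0 < s) (hε : 0 < ε) (f : ℤ × ℤ → ℝ)
    (k : ℤ × ℤ) (hk0 : k ≠ 0) (hk : en2 (pt ε k) ≤ 3) :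
    latDiffNorm p ℓ ε f k ≤
      ENNReal.ofReal (4 * Aw ℓ * en2 (pt ε k) ^ s) * latWNorm s p ℓ ε f := by
  have hA := one_le_Aw ℓ
  have hpos : 0 < en2 (pt ε k) := by
    by_contra h
    exact hk0 (pt_zero_of_en2 hε k (not_lt.1 h))
  rcases le_or_gt (en2 (pt ε k)) 1 with h1 | h1
  · have hle : ENNReal.ofReal (en2 (pt ε k) ^ (-s)) * latDiffNorm p ℓ ε f k ≤
        latWNorm s p ℓ ε f := by
      unfold latWNorm
      refine le_trans ?_ le_add_self
      exact le_iSup₂_of_le k ⟨hpos, h1⟩ le_rfl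
    calc latDiffNorm p ℓ ε f k = ENNReal.ofReal (en2 (pt ε k) ^ s) *
          (ENNReal.ofReal (en2 (pt ε k) ^ (-s)) * latDiffNorm p ℓ ε f k) := by
          rw [← mul_assoc, ← ENNReal.ofReal_mul (by positivity), ← Real.rpow_add hpos]
          simp
      _ ≤ _ := by
          gcongr
          exact le_mul_of_one_le_left (by positivity) (by linarith)
  · refine (diff_le_lp hp f k hk).trans ?_
    refine mul_le_mul' (ENNReal.ofReal_le_ofReal ?_) ?_
    · exact le_mul_of_one_le_right (by positivity) (Real.one_le_rpow h1.le hs.le)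
    · exact le_self_add

lemma cell_close {ε : ℝ} (hε : 0 < ε) (hε1 : ε ≤ 1) (t : ℝ) (n : ℤ) (h : cellIdx ε t = n) :
    |t - ε * n| ≤ 4 := by
  have := (cell_iff hε t n).1 h
  rw [abs_le]; constructor <;> linarith [this.1, this.2]

lemma lp_bound {p ℓ ε : ℝ} (hp : 1 ≤ p) (hε : 0 < ε) (hε1 : ε ≤ 1) (f : ℤ × ℤ → ℝ) :
    lpNormR2 p ℓ (Eeps ε f) ≤ ENNReal.ofReal (Aw ℓ) * lpNormLat p ℓ ε f := by
  have hA := one_le_Aw ℓ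
  unfold lpNormR2 lpNormLat
  rw [← ofReal_rpow_root hp (by positivity : (0 : ℝ) ≤ Aw ℓ),
    ← ENNReal.mul_rpow_of_nonneg _ _ (by positivity : 0 ≤ 1 / p)]
  apply ENNReal.rpow_le_rpow _ (by positivity)
  have hU : (⋃ n : ℤ × ℤ, S1 ε 0 n.1 0 ×ˢ S1 ε 0 n.2 0) = Set.univ := by
    refine Set.eq_univ_of_forall fun x => Set.mem_iUnion.2 ⟨(cellIdx ε x.1, cellIdx ε x.2), ?_⟩
    simp [S1]
  rw [← setLIntegral_univ, ← hU, mul_left_comm, ← ENNReal.tsum_mul_left]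
  apply lint_cover _ (fun n => (S1_meas hε _ _ _).prod (S1_meas hε _ _ _))
  · rintro n x ⟨h1, h2⟩
    have e : Eeps ε f x = f n := by
      unfold Eeps; rw [h1.1, h2.1]
    rw [e]
    exact term_le hp _ _ _ (cell_close hε hε1 _ _ h1.1) (cell_close hε hε1 _ _ h2.1)
  · intro n
    rw [Measure.volume_eq_prod, Measure.prod_prod, sq, ENNReal.ofReal_mul hε.le]
    exact mul_le_mul' (S1_vol hε _ _ _) (S1_vol hε _ _ _)

lemma scal {s p a ε e : ℝ} (hp : 1 ≤ p) (hs : 0 < s) (hsp : s ≤ 1 / p) (hε : 0 < ε)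
    (ha : 0 < a) (he0 : 0 ≤ e) (he : e ≤ 3 * max a ε) :
    (min 1 (a / ε)) ^ (1 / p) * e ^ s ≤ 3 * a ^ s := by
  have hm : 0 < min 1 (a / ε) := by positivity
  have hM : 0 < max a ε := by positivity
  have hs1 : s ≤ 1 := hsp.trans (by rw [div_le_one (by linarith)]; exact hp)
  have e1 : min 1 (a / ε) * max a ε = a := by
    rcases le_total a ε with h | h
    · rw [max_eq_right h, min_eq_right ((div_le_one hε).2 h)]; field_simp
    · rw [max_eq_left h, min_eq_left ((one_le_div hε).2 h), one_mul]
  calc (min 1 (a / ε)) ^ (1 / p) * e ^ s ≤ (min 1 (a / ε)) ^ s * (3 * max a ε) ^ s := by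
        gcongr ?_ * ?_
        · exact Real.rpow_le_rpow_of_exponent_ge hm (min_le_left _ _) hsp
        · exact Real.rpow_le_rpow he0 he hs.le
    _ = 3 ^ s * a ^ s := by
        rw [Real.mul_rpow (by norm_num) hM.le, mul_left_comm, ← Real.mul_rpow hm.le hM.le, e1]
    _ ≤ 3 * a ^ s := by
        gcongr
        simpa using Real.rpow_le_rpow_of_exponent_le (by norm_num : (1 : ℝ) ≤ 3) hs1

lemma piece {p s ℓ ε : ℝ} (hp : 1 ≤ p) (hs : 0 < s) (hsp : s ≤ 1 / p) (hε : 0 < ε)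
    (hε1 : ε ≤ 1) (f : ℤ × ℤ → ℝ) (h : ℝ × ℝ) (h0 : 0 < en2 h) (h1 : en2 h ≤ 1)
    (k : ℤ × ℤ) (hk : en2 (pt ε k) ≤ 3 * max (en2 h) ε) :
    ∫⁻ x in ⋃ n : ℤ × ℤ, S1 ε h.1 n.1 k.1 ×ˢ S1 ε h.2 n.2 k.2,
      ENNReal.ofReal (|rho2 ℓ x * (Eeps ε f (x + h) - Eeps ε f x)| ^ p) ≤
    (ENNReal.ofReal (12 * Aw ℓ ^ 2 * en2 h ^ s) * latWNorm s p ℓ ε f) ^ p := by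
  have hA := one_le_Aw ℓ
  have p0 : 0 < p := by linarith
  have hmx : max (en2 h) ε ≤ 1 := max_le h1 hε1
  set mn := min 1 (en2 h / ε) with hmn
  have mn0 : 0 ≤ mn := by positivity
  have hS : ∀ n : ℤ × ℤ, MeasurableSet (S1 ε h.1 n.1 k.1 ×ˢ S1 ε h.2 n.2 k.2) :=
    fun n => (S1_meas hε _ _ _).prod (S1_meas hε _ _ _)
  have hE : ∀ n : ℤ × ℤ, ∀ x ∈ S1 ε h.1 n.1 k.1 ×ˢ S1 ε h.2 n.2 k.2,
      Eeps ε f (x + h) - Eeps ε f x = f (n + k) - f n := by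
    rintro n x ⟨a, b⟩
    unfold Eeps
    rw [Prod.fst_add, Prod.snd_add, a.1, a.2, b.1, b.2]
    rfl
  by_cases hk0 : k = 0
  · refine (lint_cover _ hS _ (fun _ => 0) ⊤ ?_ (fun _ => le_top)).trans (by simp)
    intro n x hx
    rw [hE n x hx, hk0]
    simp [Real.zero_rpow p0.ne']
  have hV : ∀ n : ℤ × ℤ, volume (S1 ε h.1 n.1 k.1 ×ˢ S1 ε h.2 n.2 k.2) ≤
      ENNReal.ofReal (mn * ε ^ 2) := by
    intro n
    rw [Measure.volume_eq_prod, Measure.prod_prod]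
    have e : mn * ε ^ 2 = min (ε * ε) (en2 h * ε) := by
      rw [hmn, min_mul_of_nonneg _ _ (by positivity)]
      congr 1
      · ring
      · field_simp
    rw [e, ENNReal.ofReal_min]
    refine le_min ?_ ?_
    · rw [ENNReal.ofReal_mul hε.le]
      exact mul_le_mul' (S1_vol hε _ _ _) (S1_vol hε _ _ _)
    · by_cases hk1 : k.1 = 0
      · have hk2 : k.2 ≠ 0 := fun hk2 => hk0 (Prod.ext hk1 hk2)
        rw [mul_comm (en2 h), ENNReal.ofReal_mul hε.le]
        exact mul_le_mul' (S1_vol hε _ _ _) ((S1_vol' hε _ _ _ hk2).trans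
          (ENNReal.ofReal_le_ofReal (abs2_le_en2 h)))
      · rw [ENNReal.ofReal_mul h0.le]
        exact mul_le_mul' ((S1_vol' hε _ _ _ hk1).trans
          (ENNReal.ofReal_le_ofReal (abs1_le_en2 h))) (S1_vol hε _ _ _)
  refine (lint_cover _ hS _ (fun n => ENNReal.ofReal (Aw ℓ ^ p) *
    ENNReal.ofReal (rho2 ℓ (pt ε n) ^ p * |f (n + k) - f n| ^ p)) _ ?_ hV).trans ?_
  · intro n x hx
    rw [hE n x hx, diff_term_eq]
    exact term_le hp _ _ _ (cell_close hε hε1 _ _ hx.1.1) (cell_close hε hε1 _ _ hx.2.1)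
  have hD := diff_le (ℓ := ℓ) hp hs hε f k hk0 (hk.trans (by linarith))
  have hDp : ENNReal.ofReal (ε ^ 2) *
      ∑' n : ℤ × ℤ, ENNReal.ofReal (rho2 ℓ (pt ε n) ^ p * |f (n + k) - f n| ^ p) =
      latDiffNorm p ℓ ε f k ^ p := by
    unfold latDiffNorm
    rw [one_div, ENNReal.rpow_inv_rpow p0.ne']
  have hmnp : ENNReal.ofReal mn = ENNReal.ofReal (mn ^ (1 / p)) ^ p := by
    rw [ENNReal.ofReal_rpow_of_nonneg (by positivity) p0.le, one_div,
      Real.rpow_inv_rpow mn0 p0.ne']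
  rw [ENNReal.tsum_mul_left, ENNReal.ofReal_mul mn0, mul_assoc, mul_left_comm _ (ENNReal.ofReal (Aw ℓ ^ p)),
    hDp, hmnp, ← ENNReal.ofReal_rpow_of_nonneg (by positivity) p0.le,
    ← ENNReal.mul_rpow_of_nonneg _ _ p0.le, ← ENNReal.mul_rpow_of_nonneg _ _ p0.le]
  apply ENNReal.rpow_le_rpow _ p0.le
  refine (mul_le_mul' le_rfl (mul_le_mul' le_rfl hD)).trans ?_
  have hen := en2_nonneg (pt ε k)
  rw [← mul_assoc, ← mul_assoc, ← ENNReal.ofReal_mul (by positivity),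
    ← ENNReal.ofReal_mul (by positivity)]
  refine mul_le_mul' (ENNReal.ofReal_le_ofReal ?_) le_rfl
  have := scal hp hs hsp hε h0 hen hk
  calc _ = 4 * Aw ℓ ^ 2 * (mn ^ (1 / p) * en2 (pt ε k) ^ s) := by ring
    _ ≤ 4 * Aw ℓ ^ 2 * (3 * en2 h ^ s) := by gcongr
    _ = _ := by ring

lemma diff_bound {p s ℓ ε : ℝ} (hp : 1 ≤ p) (hs : 0 < s) (hsp : s ≤ 1 / p) (hε : 0 < ε)
    (hε1 : ε ≤ 1) (f : ℤ × ℤ → ℝ) (h : ℝ × ℝ) (h0 : 0 < en2 h) (h1 : en2 h ≤ 1) :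
    lpNormR2 p ℓ (fun x => Eeps ε f (x + h) - Eeps ε f x) ≤
      4 * (ENNReal.ofReal (12 * Aw ℓ ^ 2 * en2 h ^ s) * latWNorm s p ℓ ε f) := by
  have p0 : 0 < p := by linarith
  set Y := ENNReal.ofReal (12 * Aw ℓ ^ 2 * en2 h ^ s) * latWNorm s p ℓ ε f with hY
  unfold lpNormR2
  rw [one_div, ENNReal.rpow_inv_le_iff p0]
  have hU : (⋃ b : Bool × Bool, ⋃ n : ℤ × ℤ,
      S1 ε h.1 n.1 (sh ε h.1 b.1) ×ˢ S1 ε h.2 n.2 (sh ε h.2 b.2)) = Set.univ := by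
    refine Set.eq_univ_of_forall fun x => ?_
    obtain ⟨b1, hb1⟩ := sh_cover (ε := ε) h.1 x.1
    obtain ⟨b2, hb2⟩ := sh_cover (ε := ε) h.2 x.2
    refine Set.mem_iUnion.2 ⟨(b1, b2), Set.mem_iUnion.2 ⟨(cellIdx ε x.1, cellIdx ε x.2), ?_⟩⟩
    exact ⟨⟨rfl, hb1⟩, ⟨rfl, hb2⟩⟩
  rw [← setLIntegral_univ, ← hU]
  refine (lintegral_iUnion_le _ _).trans ?_
  have hb : ∀ b : Bool × Bool, ∫⁻ x in ⋃ n : ℤ × ℤ,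
      S1 ε h.1 n.1 (sh ε h.1 b.1) ×ˢ S1 ε h.2 n.2 (sh ε h.2 b.2),
      ENNReal.ofReal (|rho2 ℓ x * (Eeps ε f (x + h) - Eeps ε f x)| ^ p) ≤ Y ^ p := by
    intro b
    refine piece hp hs hsp hε hε1 f h h0 h1 (sh ε h.1 b.1, sh ε h.2 b.2) ?_
    have m1 := le_max_left (en2 h) ε
    have m2 := le_max_right (en2 h) ε
    apply en2_le
    · exact (sh_abs hε h.1 b.1).trans (by linarith [abs1_le_en2 h])
    · exact (sh_abs hε h.2 b.2).trans (by linarith [abs2_le_en2 h])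
  refine (ENNReal.tsum_le_tsum hb).trans ?_
  rw [tsum_fintype, Finset.sum_const, ENNReal.mul_rpow_of_nonneg 4 Y p0.le]
  have : (Finset.univ : Finset (Bool × Bool)).card = 4 := rfl
  rw [this, nsmul_eq_mul, Nat.cast_ofNat]
  have h4 : (4 : ℝ≥0∞) ≤ 4 ^ p := by
    simpa using ENNReal.rpow_le_rpow_of_exponent_le (by norm_num : (1 : ℝ≥0∞) ≤ 4) hp
  exact mul_le_mul' h4 le_rfl

end Aux9

/-- Theorem 2.18: for every `p ∈ [1,∞)`, `0 < s ≤ 1/p` and `ℓ ∈ ℝ` there is `C > 0`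
such that for all `ε ∈ (0,1]` and all `f ∈ W^{s,p}_ℓ(εℤ²)`,
`‖E^ε f‖_{L^p_ℓ(ℝ²)} + sup_{0<|h|≤1} |h|^{-s} ‖E^ε f(·+h) − E^ε f‖_{L^p_ℓ(ℝ²)}
  ≤ C ‖f‖_{W^{s,p}_ℓ(εℤ²)}`,
i.e. `E^ε : W^{s,p}_ℓ(εℤ²) → B^s_{p,∞,ℓ}(ℝ²)` boundedly, uniformly in `ε ∈ (0,1]`. -/
theorem stmt_9 (p s ℓ : ℝ) (hp : 1 ≤ p) (hs : 0 < s) (hsp : s ≤ 1 / p) :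
    ∃ C : ℝ, 0 < C ∧
      ∀ ε : ℝ, ε ∈ Set.Ioc (0 : ℝ) 1 → ∀ f : ℤ × ℤ → ℝ,
        latWNorm s p ℓ ε f < ⊤ →
        besovDiffNormR2 s p ℓ (Eeps ε f) ≤ ENNReal.ofReal C * latWNorm s p ℓ ε f := by
  have hA := Aux9.one_le_Aw ℓ
  refine ⟨Aux9.Aw ℓ + 48 * Aux9.Aw ℓ ^ 2, by positivity, ?_⟩
  rintro ε ⟨hε, hε1⟩ f -
  rw [ENNReal.ofReal_add (by positivity) (by positivity), add_mul]
  unfold besovDiffNormR2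
  refine add_le_add ?_ ?_
  · refine (Aux9.lp_bound hp hε hε1 f).trans ?_
    gcongr
    exact le_self_add
  · refine iSup₂_le fun h hh => ?_
    refine (mul_le_mul' le_rfl (Aux9.diff_bound hp hs hsp hε hε1 f h hh.1 hh.2)).trans ?_
    have hpos := hh.1
    rw [← mul_assoc, ← mul_assoc, ← ENNReal.ofReal_ofNat, ← ENNReal.ofReal_mul (by positivity),
      ← ENNReal.ofReal_mul (by positivity)]
    refine mul_le_mul' (ENNReal.ofReal_le_ofReal ?_) le_rfl
    have e : en2 h ^ (-s) * en2 h ^ s = 1 := by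
      rw [← Real.rpow_add hpos]; simp
    apply le_of_eq
    linear_combination (48 * Aux9.Aw ℓ ^ 2) * e
end
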